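/- Let H be a finite abelian group containing an element of order at least 10. Then every realization of H by a 3-net in ℙ²(ℂ) is algebraic: if p₁, p₂, p₃ : H → ℙ²(ℂ) are injective maps with pairwise disjoint images such that for all x,y,z ∈ H the points p₁(x), p₂(y), p₃(z) are collinear if and only if x+y+z = 0, then there exists a nonzero homogeneous cubic polynomial F ∈ ℂ[X,Y,Z] such that F vanishes at (representatives of) all points in the images of p₁, p₂, p₃, and the gradient of F is nonzero at a representative of each of these points. -/

import Mathlib

/-- The complex projective plane ℙ²(ℂ) = ℙ(ℂ³). -/
abbrev P2 : Type := Projectivization ℂ (Fin 3 → ℂ)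

/-- Three points of ℙ²(ℂ) are collinear if representative vectors in ℂ³ span a linear
subspace of dimension at most 2. -/
def Collin (p q r : P2) : Prop :=
  Module.finrank ℂ (Submodule.span ℂ {p.rep, q.rep, r.rep} : Submodule ℂ (Fin 3 → ℂ)) ≤ 2

/-- A realization of a finite abelian group `H` by a 3-net in ℙ²(ℂ), stated dually in
terms of the points dual to the lines of the net: three injective maps `H → ℙ²(ℂ)` with
pairwise disjoint images such that `p₁ x`, `p₂ y`, `p₃ z` are collinear iff
`x + y + z = 0`. -/
def Realizes {H : Type} [AddCommGroup H] (p₁ p₂ p₃ : H → P2) : Prop :=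
  Function.Injective p₁ ∧ Function.Injective p₂ ∧ Function.Injective p₃ ∧
  Disjoint (Set.range p₁) (Set.range p₂) ∧
  Disjoint (Set.range p₁) (Set.range p₃) ∧
  Disjoint (Set.range p₂) (Set.range p₃) ∧
  ∀ x y z : H, Collin (p₁ x) (p₂ y) (p₃ z) ↔ x + y + z = 0

/-- A realization (given dually by three maps into ℙ²(ℂ)) is algebraic if there is a
nonzero homogeneous cubic polynomial `F` on ℂ³ vanishing at every point of the images,
all of these points being smooth points of the cubic curve `F = 0`. -/
def AlgebraicOn {H : Type} (p₁ p₂ p₃ : H → P2) : Prop :=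
  ∃ F : MvPolynomial (Fin 3) ℂ, F ≠ 0 ∧ F.IsHomogeneous 3 ∧
    ∀ q ∈ Set.range p₁ ∪ Set.range p₂ ∪ Set.range p₃,
      MvPolynomial.eval q.rep F = 0 ∧
      ∃ j : Fin 3, MvPolynomial.eval q.rep (MvPolynomial.pderiv j F) ≠ 0

section Aux
open MvPolynomial
set_option linter.unusedVariables false


/-- dot product -/
def dt (n p : Fin 3 → ℂ) : ℂ := n 0 * p 0 + n 1 * p 1 + n 2 * p 2
/-- cross product -/
def crs (u v : Fin 3 → ℂ) : Fin 3 → ℂ :=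
  ![u 1 * v 2 - u 2 * v 1, u 2 * v 0 - u 0 * v 2, u 0 * v 1 - u 1 * v 0]
/-- determinant -/
def det3 (u v w : Fin 3 → ℂ) : ℂ := dt (crs u v) w

lemma crs0 (u v : Fin 3 → ℂ) : crs u v 0 = u 1 * v 2 - u 2 * v 1 := rfl
lemma crs1 (u v : Fin 3 → ℂ) : crs u v 1 = u 2 * v 0 - u 0 * v 2 := rfl
lemma crs2 (u v : Fin 3 → ℂ) : crs u v 2 = u 0 * v 1 - u 1 * v 0 := rfl

lemma vec_ne {u : Fin 3 → ℂ} (h : u ≠ 0) : u 0 ≠ 0 ∨ u 1 ≠ 0 ∨ u 2 ≠ 0 := by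
  by_contra hc
  push Not at hc
  apply h; funext i; fin_cases i <;> simp [hc]

lemma det_cyc (u v w : Fin 3 → ℂ) : det3 v w u = det3 u v w := by
  simp only [det3, dt, crs0, crs1, crs2]; ring
lemma det_swap (u v w : Fin 3 → ℂ) : det3 v u w = - det3 u v w := by
  simp only [det3, dt, crs0, crs1, crs2]; ring
lemma det_self1 (u v : Fin 3 → ℂ) : det3 u v u = 0 := by
  simp only [det3, dt, crs0, crs1, crs2]; ring
lemma det_self2 (u v : Fin 3 → ℂ) : det3 u v v = 0 := by
  simp only [det3, dt, crs0, crs1, crs2]; ring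
lemma crs_swap (u v : Fin 3 → ℂ) : crs v u = - crs u v := by
  funext i; fin_cases i <;> simp [crs] <;> ring
lemma crs_ne_symm {u v : Fin 3 → ℂ} (h : crs u v ≠ 0) : crs v u ≠ 0 := by
  rw [crs_swap]; simpa using h
lemma dt_comm (u v : Fin 3 → ℂ) : dt u v = dt v u := by
  simp only [dt]; ring
lemma dt_add (n u v : Fin 3 → ℂ) : dt n (u + v) = dt n u + dt n v := by
  simp only [dt, Pi.add_apply]; ring
lemma dt_smul (n u : Fin 3 → ℂ) (c : ℂ) : dt n (c • u) = c * dt n u := by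
  simp only [dt, Pi.smul_apply, smul_eq_mul]; ring
lemma dt_smul' (n u : Fin 3 → ℂ) (c : ℂ) : dt (c • n) u = c * dt n u := by
  simp only [dt, Pi.smul_apply, smul_eq_mul]; ring
lemma dt_add' (m n u : Fin 3 → ℂ) : dt (m + n) u = dt m u + dt n u := by
  simp only [dt, Pi.add_apply]; ring

/-- a vector dependent on two independent ones -/
lemma span_of_det {u v w : Fin 3 → ℂ} (h : crs u v ≠ 0) (hd : det3 u v w = 0) :
    ∃ a b : ℂ, w = a • u + b • v := by
  simp only [det3, dt] at hd
  rcases vec_ne h with h | h | h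
  · refine ⟨(w 1 * v 2 - w 2 * v 1) / crs u v 0, (u 1 * w 2 - u 2 * w 1) / crs u v 0, ?_⟩
    funext i
    fin_cases i <;> simp only [Pi.add_apply, Pi.smul_apply, smul_eq_mul, Fin.zero_eta, Fin.mk_one, Fin.reduceFinMk] <;> field_simp <;>
      simp only [crs0, crs1, crs2] at hd ⊢ <;> first | ring1 | linear_combination hd | linear_combination -hd
  · refine ⟨(w 2 * v 0 - w 0 * v 2) / crs u v 1, (u 2 * w 0 - u 0 * w 2) / crs u v 1, ?_⟩
    funext i
    fin_cases i <;> simp only [Pi.add_apply, Pi.smul_apply, smul_eq_mul, Fin.zero_eta, Fin.mk_one, Fin.reduceFinMk] <;> field_simp <;>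
      simp only [crs0, crs1, crs2] at hd ⊢ <;> first | ring1 | linear_combination hd | linear_combination -hd
  · refine ⟨(w 0 * v 1 - w 1 * v 0) / crs u v 2, (u 0 * w 1 - u 1 * w 0) / crs u v 2, ?_⟩
    funext i
    fin_cases i <;> simp only [Pi.add_apply, Pi.smul_apply, smul_eq_mul, Fin.zero_eta, Fin.mk_one, Fin.reduceFinMk] <;> field_simp <;>
      simp only [crs0, crs1, crs2] at hd ⊢ <;> first | ring1 | linear_combination hd | linear_combination -hd

lemma prop_of_crs {u v : Fin 3 → ℂ} (hu : u ≠ 0) (h : crs u v = 0) : ∃ c : ℂ, v = c • u := by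
  have h0 := congrFun h 0
  have h1 := congrFun h 1
  have h2 := congrFun h 2
  rw [crs0] at h0; rw [crs1] at h1; rw [crs2] at h2
  simp only [Pi.zero_apply] at h0 h1 h2
  rcases vec_ne hu with hh | hh | hh
  · refine ⟨v 0 / u 0, ?_⟩
    funext i
    fin_cases i <;> simp only [Pi.smul_apply, smul_eq_mul, Fin.zero_eta, Fin.mk_one, Fin.reduceFinMk] <;> field_simp <;> first | ring1 | grind
  · refine ⟨v 1 / u 1, ?_⟩
    funext i
    fin_cases i <;> simp only [Pi.smul_apply, smul_eq_mul, Fin.zero_eta, Fin.mk_one, Fin.reduceFinMk] <;> field_simp <;> first | ring1 | grind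
  · refine ⟨v 2 / u 2, ?_⟩
    funext i
    fin_cases i <;> simp only [Pi.smul_apply, smul_eq_mul, Fin.zero_eta, Fin.mk_one, Fin.reduceFinMk] <;> field_simp <;> first | ring1 | grind

lemma crs_ne_left {u v : Fin 3 → ℂ} (h : crs u v ≠ 0) : u ≠ 0 := by
  rintro rfl; apply h; funext i; fin_cases i <;> simp [crs]
lemma crs_ne_right {u v : Fin 3 → ℂ} (h : crs u v ≠ 0) : v ≠ 0 := by
  rintro rfl; apply h; funext i; fin_cases i <;> simp [crs]

/-- triple product expansion -/
lemma crs_crs (n u v : Fin 3 → ℂ) : crs (crs u v) n = dt n u • v - dt n v • u := by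
  funext i
  fin_cases i <;> simp [crs, dt] <;> ring

/-- a form killing two independent vectors is a multiple of their cross product -/
lemma form_of_two {n u v : Fin 3 → ℂ} (h : crs u v ≠ 0) (h1 : dt n u = 0) (h2 : dt n v = 0) :
    ∃ c : ℂ, n = c • crs u v := by
  apply prop_of_crs h
  rw [crs_crs, h1, h2]; simp

/-- two independent vectors killed by a form determine collinearity -/
lemma det_of_form {n u v w : Fin 3 → ℂ} (hn : n ≠ 0) (h1 : dt n u = 0) (h2 : dt n v = 0)
    (h3 : dt n w = 0) : det3 u v w = 0 := by
  by_cases h : crs u v = 0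
  · simp [det3, h, dt]
  · obtain ⟨c, hc⟩ := form_of_two h h1 h2
    have hc0 : c ≠ 0 := by rintro rfl; apply hn; simpa using hc
    rw [hc, dt_smul'] at h3
    simpa [hc0, det3] using h3

lemma dt_crs_left (u v : Fin 3 → ℂ) : dt (crs u v) u = 0 := det_self1 u v
lemma dt_crs_right (u v : Fin 3 → ℂ) : dt (crs u v) v = 0 := det_self2 u v

/-- a point on both of two distinct lines through `b` is proportional to `b` -/
lemma crs_smul_left (c : ℂ) (u v : Fin 3 → ℂ) : crs (c • u) v = c • crs u v := by
  funext i; fin_cases i <;> simp [crs] <;> ring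
lemma crs_smul_right (c : ℂ) (u v : Fin 3 → ℂ) : crs u (c • v) = c • crs u v := by
  funext i; fin_cases i <;> simp [crs] <;> ring

/-- linear form -/
noncomputable def lin (n : Fin 3 → ℂ) : MvPolynomial (Fin 3) ℂ :=
  C (n 0) * X 0 + C (n 1) * X 1 + C (n 2) * X 2

@[simp] lemma eval_lin (n p : Fin 3 → ℂ) : eval p (lin n) = dt n p := by
  simp [lin, dt]

lemma lin_hom (n : Fin 3 → ℂ) : (lin n).IsHomogeneous 1 :=
  ((isHomogeneous_C_mul_X _ _).add (isHomogeneous_C_mul_X _ _)).add (isHomogeneous_C_mul_X _ _)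

lemma lin_ne {n : Fin 3 → ℂ} (h : n ≠ 0) : lin n ≠ 0 := by
  intro h0
  apply h
  have : ∀ p, dt n p = 0 := fun p => by rw [← eval_lin, h0]; simp
  funext i
  have := this (Pi.single i 1)
  fin_cases i <;> simpa [dt] using this

lemma lin_irred {n : Fin 3 → ℂ} (h : n ≠ 0) : Irreducible (lin n) := by
  apply irreducible_of_totalDegree_eq_one
  · exact (lin_hom n).totalDegree (lin_ne h)
  · intro x hx
    rw [isUnit_iff_ne_zero]
    rintro rfl
    apply lin_ne h
    ext m
    simpa using hx m

lemma hom_one_eq_lin {F : MvPolynomial (Fin 3) ℂ} (h : F.IsHomogeneous 1) : ∃ n, F = lin n := by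
  have : F ∈ homogeneousSubmodule (Fin 3) ℂ 1 := h
  rw [homogeneousSubmodule_one_eq_span_X, Submodule.mem_span_range_iff_exists_fun] at this
  obtain ⟨c, rfl⟩ := this
  refine ⟨c, ?_⟩
  simp [lin, Fin.sum_univ_three, smul_eq_C_mul]

lemma lin_dvd {n : Fin 3 → ℂ} (h : n ≠ 0) {F : MvPolynomial (Fin 3) ℂ}
    (hF : ∀ w, dt n w = 0 → eval w F = 0) : lin n ∣ F := by
  have hp : Prime (lin n) := (lin_irred h).prime
  have hI : (Ideal.span {lin n}).IsPrime := (Ideal.span_singleton_prime hp.ne_zero).2 hp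
  rw [← Ideal.mem_span_singleton, ← MvPolynomial.IsPrime.vanishingIdeal_zeroLocus (K := ℂ) (Ideal.span {lin n})]
  rw [mem_vanishingIdeal_iff]
  intro x hx
  rw [mem_zeroLocus_iff] at hx
  have := hx (lin n) (Ideal.mem_span_singleton_self _)
  have e : ∀ G : MvPolynomial (Fin 3) ℂ, aeval x G = eval x G := fun G => by
    rw [← coe_aeval_eq_eval]; rfl
  rw [e] at this ⊢
  exact hF x (by simpa using this)


lemma eval_smul_hom {F : MvPolynomial (Fin 3) ℂ} {d : ℕ} (hF : F.IsHomogeneous d)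
    (c : ℂ) (p : Fin 3 → ℂ) : eval (c • p) F = c ^ d * eval p F := by
  rw [eval_eq, eval_eq, Finset.mul_sum]
  refine Finset.sum_congr rfl fun m hm => ?_
  have := hF.degree_eq_sum_deg_support hm
  have h2 : ∏ i ∈ m.support, (c • p) i ^ m i = c ^ d * ∏ i ∈ m.support, p i ^ m i := by
    simp only [Pi.smul_apply, smul_eq_mul, mul_pow]
    rw [Finset.prod_mul_distrib, Finset.prod_pow_eq_pow_sum, this]
  rw [h2]; ring

/-- scaling map -/
noncomputable def sc : MvPolynomial (Fin 3) ℂ →ₐ[ℂ] Polynomial (MvPolynomial (Fin 3) ℂ) :=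
  aeval (fun i => Polynomial.C (X i) * Polynomial.X)

lemma sc_monomial (m : Fin 3 →₀ ℕ) (c : ℂ) :
    sc (monomial m c) = Polynomial.monomial m.degree (monomial m c) := by
  rw [sc, aeval_monomial, Finsupp.prod_fintype _ _ (by simp), Finsupp.degree_eq_sum]
  conv_rhs => rw [monomial_eq, Finsupp.prod_fintype _ _ (by simp)]
  simp only [Fin.prod_univ_three, Fin.sum_univ_three, ← Polynomial.C_mul_X_pow_eq_monomial,
    Polynomial.C_mul, Polynomial.C_pow, mul_pow, pow_add]
  have : (algebraMap ℂ (Polynomial (MvPolynomial (Fin 3) ℂ))) c = Polynomial.C (C c) := rfl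
  rw [this]
  ring

lemma sc_coeff (G : MvPolynomial (Fin 3) ℂ) (k : ℕ) :
    (sc G).coeff k = homogeneousComponent k G := by
  induction G using MvPolynomial.induction_on' with
  | monomial m c =>
    rw [sc_monomial, Polynomial.coeff_monomial]
    have hm : (monomial m c).IsHomogeneous m.degree := isHomogeneous_monomial c rfl
    rw [homogeneousComponent_of_mem hm]
    simp only [eq_comm]
  | add p q hp hq => rw [map_add, Polynomial.coeff_add, hp, hq, map_add]

lemma sc_hom {F : MvPolynomial (Fin 3) ℂ} {d : ℕ} (hF : F.IsHomogeneous d) :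
    sc F = Polynomial.monomial d F := by
  ext1 k
  rw [sc_coeff, Polynomial.coeff_monomial, homogeneousComponent_of_mem hF]
  simp only [eq_comm]

lemma hom_factor {F G K : MvPolynomial (Fin 3) ℂ} {d : ℕ} (hF : F.IsHomogeneous d)
    (h0 : F ≠ 0) (h : F = G * K) :
    ∃ a b, a + b = d ∧ G.IsHomogeneous a ∧ K.IsHomogeneous b := by
  have hG : G ≠ 0 := by rintro rfl; simp_all
  have hK : K ≠ 0 := by rintro rfl; simp_all
  have inj : ∀ G : MvPolynomial (Fin 3) ℂ, G ≠ 0 → sc G ≠ 0 := by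
    intro G hG h
    apply hG
    rw [← sum_homogeneousComponent G]
    refine Finset.sum_eq_zero fun i _ => ?_
    rw [← sc_coeff, h]; simp
  have e : sc G * sc K = Polynomial.monomial d F := by rw [← map_mul, ← h, sc_hom hF]
  have e1 := congrArg Polynomial.natDegree e
  have e2 := congrArg Polynomial.natTrailingDegree e
  rw [Polynomial.natDegree_mul (inj G hG) (inj K hK), Polynomial.natDegree_monomial_eq _ h0] at e1
  rw [Polynomial.natTrailingDegree_mul (inj G hG) (inj K hK), Polynomial.natTrailingDegree_monomial h0] at e2
  have l1 := Polynomial.natTrailingDegree_le_natDegree (sc G)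
  have l2 := Polynomial.natTrailingDegree_le_natDegree (sc K)
  have key : ∀ G : MvPolynomial (Fin 3) ℂ, (sc G).natTrailingDegree = (sc G).natDegree →
      G.IsHomogeneous (sc G).natDegree := by
    intro G hh
    have : G = homogeneousComponent (sc G).natDegree G := by
      conv_lhs => rw [← sum_homogeneousComponent G]
      by_cases hmem : (sc G).natDegree ∈ Finset.range (G.totalDegree + 1)
      · refine Finset.sum_eq_single_of_mem _ hmem fun k _ hk => ?_
        rw [← sc_coeff]
        rcases lt_or_gt_of_ne hk with hk | hk
        · exact Polynomial.coeff_eq_zero_of_lt_natTrailingDegree (hh ▸ hk)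
        · exact Polynomial.coeff_eq_zero_of_natDegree_lt hk
      · have hz : homogeneousComponent (sc G).natDegree G = 0 := by
          apply homogeneousComponent_eq_zero
          simp at hmem; omega
        rw [hz]
        refine Finset.sum_eq_zero fun k hk => ?_
        have hk' : k < (sc G).natDegree := by simp at hmem hk; omega
        rw [← sc_coeff]
        exact Polynomial.coeff_eq_zero_of_lt_natTrailingDegree (hh ▸ hk')
    rw [this]
    convert homogeneousComponent_isHomogeneous _ _
    rw [← this]
  exact ⟨_, _, e1, key G (by omega), key K (by omega)⟩

lemma hom_quot {F G K : MvPolynomial (Fin 3) ℂ} {d a : ℕ} (hF : F.IsHomogeneous d)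
    (h0 : F ≠ 0) (h : F = G * K) (hG : G.IsHomogeneous a) :
    ∃ b, a + b = d ∧ K.IsHomogeneous b := by
  obtain ⟨a', b, h1, h2, h3⟩ := hom_factor hF h0 h
  have : G ≠ 0 := by rintro rfl; simp_all
  exact ⟨b, by rw [hG.inj_right h2 this]; exact h1, h3⟩

/-- restriction to a line -/
noncomputable def lnp (F : MvPolynomial (Fin 3) ℂ) (v u : Fin 3 → ℂ) : Polynomial ℂ :=
  aeval (fun i => Polynomial.C (v i) + Polynomial.C (u i) * Polynomial.X) F

lemma lnp_eval (F : MvPolynomial (Fin 3) ℂ) (v u : Fin 3 → ℂ) (t : ℂ) :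
    (lnp F v u).eval t = eval (v + t • u) F := by
  have : (lnp F v u).eval t = (Polynomial.evalRingHom t) (lnp F v u) := rfl
  rw [this, lnp, aeval_def, hom_eval₂]
  have h1 : (Polynomial.evalRingHom t).comp (algebraMap ℂ (Polynomial ℂ)) = RingHom.id ℂ := by
    ext1 x; simp
  rw [h1, eval₂_id]
  congr 1
  congr 1
  funext i
  simp; ring

lemma lnp_deg {F : MvPolynomial (Fin 3) ℂ} {d : ℕ} (hF : F.IsHomogeneous d) (v u : Fin 3 → ℂ) :
    (lnp F v u).natDegree ≤ d := by
  have := aeval_natDegree_le (m := d) (n := 1) F hF.totalDegree_le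
    (fun i => Polynomial.C (v i) + Polynomial.C (u i) * Polynomial.X) (fun i => by compute_degree)
  simpa [lnp] using this

lemma crs_add_left (u v w : Fin 3 → ℂ) : crs (u + v) w = crs u w + crs v w := by
  funext i; fin_cases i <;> simp [crs] <;> ring
lemma crs_add_right (u v w : Fin 3 → ℂ) : crs w (u + v) = crs w u + crs w v := by
  funext i; fin_cases i <;> simp [crs] <;> ring

lemma crs_self (u : Fin 3 → ℂ) : crs u u = 0 := by
  funext i; fin_cases i <;> simp [crs] <;> ring

/-- avoid finitely many points on a line -/
lemma avoid {p q : Fin 3 → ℂ} (h : crs p q ≠ 0) (l : List (Fin 3 → ℂ)) (hl : ∀ r ∈ l, r ≠ 0) :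
    ∃ s : ℂ, ∀ r ∈ l, crs (p + s • q) r ≠ 0 := by
  have hfin : (⋃ r ∈ {r | r ∈ l}, {s : ℂ | crs (p + s • q) r = 0}).Finite := by
    refine Set.Finite.biUnion (List.finite_toSet l) fun r hr => ?_
    apply Set.Subsingleton.finite
    intro s hs t ht
    simp only [Set.mem_ofPred_eq, crs_add_left, crs_smul_left] at hs ht
    by_contra hst
    have h1 : (s - t) • crs q r = 0 := by
      have : (s - t) • crs q r = (crs p r + s • crs q r) - (crs p r + t • crs q r) := by module
      rw [this, hs, ht]; simp
    have h2 : crs q r = 0 := by simpa [sub_ne_zero.2 hst] using h1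
    have h3 : crs p r = 0 := by simpa [h2] using hs
    have hr0 := hl r hr
    obtain ⟨a, ha⟩ := prop_of_crs hr0 (u := r) (v := q) (by rw [crs_swap, h2]; simp)
    obtain ⟨b, hb⟩ := prop_of_crs hr0 (u := r) (v := p) (by rw [crs_swap, h3]; simp)
    apply h
    rw [ha, hb, crs_smul_left, crs_smul_right, crs_self]; simp
  obtain ⟨s, hs⟩ := hfin.infinite_compl.nonempty
  refine ⟨s, fun r hr hc => hs ?_⟩
  simp only [Set.mem_iUnion]
  exact ⟨r, hr, hc⟩

lemma vanish_line {F : MvPolynomial (Fin 3) ℂ} {d : ℕ} (hF : F.IsHomogeneous d) (hd : d ≠ 0)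
    {n : Fin 3 → ℂ} (hn : n ≠ 0) (l : List (Fin 3 → ℂ)) (hl : d < l.length)
    (hp : l.Pairwise (fun u v => crs u v ≠ 0)) (hln : ∀ r ∈ l, dt n r = 0)
    (hz : ∀ r ∈ l, eval r F = 0) (w : Fin 3 → ℂ) (hw : dt n w = 0) : eval w F = 0 := by
  match l, hl, hp, hln, hz with
  | [], hl, _, _, _ => simp at hl
  | [x], hl, _, _, _ => simp at hl; omega
  | p :: q :: l', hl, hp, hln, hz =>
  set l := p :: q :: l' with hldef
  have hpq : crs p q ≠ 0 := by
    rw [hldef, List.pairwise_cons] at hp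
    exact hp.1 q (by simp)
  by_cases hw0 : w = 0
  · have := eval_smul_hom hF 0 p
    rw [zero_smul, zero_pow hd, zero_mul] at this
    rw [hw0, this]
  have hne : ∀ r ∈ l, r ≠ 0 := by
    intro r hr
    rw [hldef] at hr
    rcases List.mem_cons.1 hr with rfl | hr'
    · exact crs_ne_left hpq
    · rw [hldef, List.pairwise_cons] at hp
      exact crs_ne_right (hp.1 r hr')
  obtain ⟨s, hs⟩ := avoid hpq (w :: l) (by
    intro r hr
    rcases List.mem_cons.1 hr with rfl | hr
    · exact hw0
    · exact hne r hr)
  set u := p + s • q with hu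
  have hup : crs u p ≠ 0 := hs p (by simp [hldef])
  have hnu : dt n u = 0 := by
    rw [hu, dt_add, dt_smul, hln p (by simp [hldef]), hln q (by simp [hldef])]; simp
  have hnp : dt n p = 0 := hln p (by simp [hldef])
  clear_value u
  have par : ∀ r, crs u r ≠ 0 → dt n r = 0 → ∃ a t : ℂ, a ≠ 0 ∧ r = a • (p + t • u) := by
    intro r hr hnr
    obtain ⟨b, a, hab⟩ := span_of_det hup (det_of_form hn hnu hnp hnr)
    have ha : a ≠ 0 := by
      rintro rfl
      apply hr; rw [hab]; simp [crs_smul_right, crs_self]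
    refine ⟨a, b / a, ha, ?_⟩
    rw [hab, smul_add, smul_smul, mul_div_cancel₀ _ ha]
    module
  have zero_iff : ∀ a t : ℂ, a ≠ 0 → (eval (a • (p + t • u)) F = 0 ↔ (lnp F p u).eval t = 0) := by
    intro a t ha
    rw [eval_smul_hom hF, lnp_eval]
    simp [ha]
  have hpoly : lnp F p u = 0 := by
    classical
    have : ∀ r : Fin 3 → ℂ, ∃ t : ℂ, r ∈ l → ∃ a : ℂ, a ≠ 0 ∧ r = a • (p + t • u) := by
      intro r
      by_cases hr : r ∈ l
      · obtain ⟨a, t, h1, h2⟩ := par r (hs r (by simp [hr])) (hln r hr)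
        exact ⟨t, fun _ => ⟨a, h1, h2⟩⟩
      · exact ⟨0, fun h => absurd h hr⟩
    choose T hT using this
    have hnd : (l.map T).Nodup := by
      rw [List.Nodup, List.pairwise_map]
      refine List.Pairwise.imp_of_mem ?_ hp
      intro r r' hr hr' hrr hTT
      obtain ⟨a, ha, hra⟩ := hT r hr
      obtain ⟨a', ha', hra'⟩ := hT r' hr'
      apply hrr
      rw [hra, hra', hTT, crs_smul_left, crs_smul_right, crs_self]; simp
    refine Polynomial.eq_zero_of_natDegree_lt_card_of_eval_eq_zero' _ (l.map T).toFinset ?_ ?_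
    · intro t ht
      simp only [List.mem_toFinset, List.mem_map] at ht
      obtain ⟨r, hr, rfl⟩ := ht
      obtain ⟨a, ha, hra⟩ := hT r hr
      rw [← zero_iff a _ ha, ← hra]
      exact hz r hr
    · rw [List.toFinset_card_of_nodup hnd, List.length_map]
      exact lt_of_le_of_lt (lnp_deg hF p u) hl
  obtain ⟨a, t, ha, hwt⟩ := par w (hs w (by simp)) hw
  rw [hwt, zero_iff a t ha, hpoly]; simp

lemma lin_dvd_of_line {F : MvPolynomial (Fin 3) ℂ} {d : ℕ} (hF : F.IsHomogeneous d) (hd : d ≠ 0)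
    {n : Fin 3 → ℂ} (hn : n ≠ 0) (l : List (Fin 3 → ℂ)) (hl : d < l.length)
    (hp : l.Pairwise (fun u v => crs u v ≠ 0)) (hln : ∀ r ∈ l, dt n r = 0)
    (hz : ∀ r ∈ l, eval r F = 0) : lin n ∣ F :=
  lin_dvd hn (vanish_line hF hd hn l hl hp hln hz)


lemma hom_zero_unit {F : MvPolynomial (Fin 3) ℂ} (h : F.IsHomogeneous 0) (h0 : F ≠ 0) : IsUnit F := by
  have h1 : F.totalDegree = 0 := h.totalDegree h0
  rw [totalDegree_eq_zero_iff_eq_C] at h1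
  rw [h1]
  have : coeff 0 F ≠ 0 := by intro h2; rw [h2] at h1; simp at h1; exact h0 h1
  exact (isUnit_iff_ne_zero.2 this).map C

lemma hom_not_unit {F : MvPolynomial (Fin 3) ℂ} {d : ℕ} (h : F.IsHomogeneous d) (hd : d ≠ 0) :
    ¬ IsUnit F := by
  intro hu
  obtain ⟨c, hc⟩ := hu.exists_right_inv
  have := congrArg (eval (0 : Fin 3 → ℂ)) hc
  have h2 := eval_smul_hom h 0 0
  rw [smul_zero, zero_pow hd, zero_mul] at h2
  rw [map_mul, h2] at this
  simp at this

lemma reducible_hom {F : MvPolynomial (Fin 3) ℂ} {d : ℕ} (h : F.IsHomogeneous d) (h0 : F ≠ 0)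
    (hd : d ≠ 0) (hi : ¬ Irreducible F) : ∃ G K a b, a + b = d ∧ a ≠ 0 ∧ b ≠ 0 ∧ F = G * K ∧
      G.IsHomogeneous a ∧ K.IsHomogeneous b := by
  rw [irreducible_iff] at hi
  push Not at hi
  obtain ⟨G, K, hGK, h1, h2⟩ := hi (hom_not_unit h hd)
  obtain ⟨a, b, hab, ha, hb⟩ := hom_factor h h0 hGK
  have hG : G ≠ 0 := by rintro rfl; simp_all
  have hK : K ≠ 0 := by rintro rfl; simp_all
  refine ⟨G, K, a, b, hab, ?_, ?_, hGK, ha, hb⟩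
  · rintro rfl; exact h1 (hom_zero_unit ha hG)
  · rintro rfl; exact h2 (hom_zero_unit hb hK)

lemma ne_of_lin {n : Fin 3 → ℂ} (h : lin n ≠ 0) : n ≠ 0 := by
  rintro rfl; apply h; simp [lin]

lemma cubic_cases {F : MvPolynomial (Fin 3) ℂ} (h : F.IsHomogeneous 3) (h0 : F ≠ 0) :
    Irreducible F ∨ ∃ n Q, n ≠ 0 ∧ Q ≠ 0 ∧ Q.IsHomogeneous 2 ∧ F = lin n * Q := by
  by_cases hi : Irreducible F
  · exact Or.inl hi
  right
  obtain ⟨G, K, a, b, hab, ha, hb, hGK, hG, hK⟩ := reducible_hom h h0 (by norm_num) hi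
  have hG0 : G ≠ 0 := by rintro rfl; simp_all
  have hK0 : K ≠ 0 := by rintro rfl; simp_all
  have : a = 1 ∧ b = 2 ∨ a = 2 ∧ b = 1 := by omega
  rcases this with ⟨rfl, rfl⟩ | ⟨rfl, rfl⟩
  · obtain ⟨n, rfl⟩ := hom_one_eq_lin hG
    exact ⟨n, K, ne_of_lin hG0, hK0, hK, hGK⟩
  · obtain ⟨n, rfl⟩ := hom_one_eq_lin hK
    exact ⟨n, G, ne_of_lin hK0, hG0, hG, by rw [hGK, mul_comm]⟩

lemma quad_cases {F : MvPolynomial (Fin 3) ℂ} (h : F.IsHomogeneous 2) (h0 : F ≠ 0) :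
    Irreducible F ∨ ∃ n m, n ≠ 0 ∧ m ≠ 0 ∧ F = lin n * lin m := by
  by_cases hi : Irreducible F
  · exact Or.inl hi
  right
  obtain ⟨G, K, a, b, hab, ha, hb, hGK, hG, hK⟩ := reducible_hom h h0 (by norm_num) hi
  have hG0 : G ≠ 0 := by rintro rfl; simp_all
  have hK0 : K ≠ 0 := by rintro rfl; simp_all
  have : a = 1 ∧ b = 1 := by omega
  rcases this with ⟨rfl, rfl⟩
  obtain ⟨n, rfl⟩ := hom_one_eq_lin hG
  obtain ⟨m, rfl⟩ := hom_one_eq_lin hK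
  exact ⟨n, m, ne_of_lin hG0, ne_of_lin hK0, hGK⟩

/-- no three distinct collinear points on an irreducible conic -/
lemma conic_no_three {Q : MvPolynomial (Fin 3) ℂ} (h : Q.IsHomogeneous 2) (hi : Irreducible Q)
    {a b c : Fin 3 → ℂ} (hab : crs a b ≠ 0) (hac : crs a c ≠ 0) (hbc : crs b c ≠ 0)
    (hd : det3 a b c = 0) (ha : eval a Q = 0) (hb : eval b Q = 0) (hc : eval c Q = 0) : False := by
  have hdvd : lin (crs a b) ∣ Q := by
    refine lin_dvd_of_line h (by norm_num) hab [a, b, c] (by simp) ?_ ?_ ?_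
    · simp [hab, hac, hbc]
    · simp [dt_crs_left, dt_crs_right]; exact hd
    · simp [ha, hb, hc]
  have ass := (lin_irred hab).associated_of_dvd hi hdvd
  obtain ⟨u, hu⟩ := ass
  obtain ⟨b', h1, h2⟩ := hom_quot h hi.ne_zero hu.symm (lin_hom _)
  have : b' = 1 := by omega
  subst this
  exact hom_not_unit h2 one_ne_zero u.isUnit

lemma deriv_lnp (F : MvPolynomial (Fin 3) ℂ) (v u : Fin 3 → ℂ) :
    Polynomial.derivative (lnp F v u) =
      ∑ j, lnp (pderiv j F) v u * Polynomial.C (u j) := by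
  induction F using MvPolynomial.induction_on with
  | C a => simp [lnp]
  | add p q hp hq => 
    simp only [lnp, map_add] at *
    rw [hp, hq]
    simp only [Fin.sum_univ_three]; ring
  | mul_X p i hp =>
    simp only [lnp, map_mul, Polynomial.derivative_mul, aeval_X, pderiv_mul, map_add, pderiv_X] at *
    rw [hp]
    simp only [Fin.sum_univ_three]
    fin_cases i <;> simp [Pi.single_apply] <;> ring

lemma vanish_sing {F : MvPolynomial (Fin 3) ℂ} (hF : F.IsHomogeneous 3)
    {a b c : Fin 3 → ℂ} (hab : crs a b ≠ 0) (hac : crs a c ≠ 0) (hbc : crs b c ≠ 0)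
    (hd : det3 a b c = 0) (ha : eval a F = 0) (hb : eval b F = 0) (hc : eval c F = 0)
    (hs : ∀ j, eval a (pderiv j F) = 0) (w : Fin 3 → ℂ) (hw : det3 a b w = 0) :
    eval w F = 0 := by
  by_cases hw0 : w = 0
  · have := eval_smul_hom hF 0 a
    rw [zero_smul, ha, mul_zero] at this
    rw [hw0, this]
  obtain ⟨s, hs'⟩ := avoid hab [a, b, c, w] (by
    simp [crs_ne_left hab, crs_ne_right hab, crs_ne_right hac, hw0])
  set u := a + s • b with hu
  have hua : crs u a ≠ 0 := hs' a (by simp)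
  have hub : crs u b ≠ 0 := hs' b (by simp)
  have huc : crs u c ≠ 0 := hs' c (by simp)
  have huw : crs u w ≠ 0 := hs' w (by simp)
  have hn := hab
  have hnu : dt (crs a b) u = 0 := by
    rw [hu, dt_add, dt_smul, dt_crs_left, dt_crs_right]; simp
  clear_value u
  have par : ∀ r, crs u r ≠ 0 → det3 a b r = 0 → ∃ α t : ℂ, α ≠ 0 ∧ r = α • (a + t • u) := by
    intro r hr hnr
    obtain ⟨b, a', hab'⟩ := span_of_det hua (det_of_form hn hnu (dt_crs_left a b) hnr)
    have ha' : a' ≠ 0 := by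
      rintro rfl
      apply hr; rw [hab']; simp [crs_smul_right, crs_self]
    refine ⟨a', b / a', ha', ?_⟩
    rw [hab', smul_add, smul_smul, mul_div_cancel₀ _ ha']
    module
  have zero_iff : ∀ α t : ℂ, α ≠ 0 → (eval (α • (a + t • u)) F = 0 ↔ (lnp F a u).eval t = 0) := by
    intro α t ha
    rw [eval_smul_hom hF, lnp_eval]
    simp [ha]
  obtain ⟨β, tb, hβ, hbt⟩ := par b hub (det_self2 a b)
  obtain ⟨γ, tc, hγ, hct⟩ := par c huc hd
  obtain ⟨δ, tw, hδ, hwt⟩ := par w huw hw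
  have htb : tb ≠ 0 := by
    rintro rfl; apply hab; rw [hbt]; simp [crs_smul_right, crs_self]
  have htc : tc ≠ 0 := by
    rintro rfl; apply hac; rw [hct]; simp [crs_smul_right, crs_self]
  have htbc : tb ≠ tc := by
    intro h; apply hbc; rw [hbt, hct, h, crs_smul_left, crs_smul_right, crs_self]; simp
  have hzb : (lnp F a u).eval tb = 0 := by rw [← zero_iff β tb hβ, ← hbt]; exact hb
  have hzc : (lnp F a u).eval tc = 0 := by rw [← zero_iff γ tc hγ, ← hct]; exact hc
  have h0 : (lnp F a u).coeff 0 = 0 := by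
    rw [Polynomial.coeff_zero_eq_eval_zero, lnp_eval]; simpa using ha
  have h1 : (lnp F a u).coeff 1 = 0 := by
    have : (Polynomial.derivative (lnp F a u)).coeff 0 = 0 := by
      rw [deriv_lnp, Polynomial.coeff_zero_eq_eval_zero, Polynomial.eval_finsetSum]
      refine Finset.sum_eq_zero fun j _ => ?_
      rw [Polynomial.eval_mul, lnp_eval]
      simp [hs j]
    rw [Polynomial.coeff_derivative] at this
    simpa using this
  have hX : Polynomial.X ^ 2 ∣ lnp F a u := by
    rw [Polynomial.X_pow_dvd_iff]
    intro d hd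
    interval_cases d <;> assumption
  obtain ⟨r, hr⟩ := hX
  have hr0 : r = 0 := by
    by_contra hr0
    have hdeg := lnp_deg hF a u
    rw [hr, Polynomial.natDegree_mul (by simp) hr0, Polynomial.natDegree_X_pow] at hdeg
    apply hr0
    refine Polynomial.eq_zero_of_natDegree_lt_card_of_eval_eq_zero' r {tb, tc} ?_ ?_
    · intro t ht
      simp only [Finset.mem_insert, Finset.mem_singleton] at ht
      rcases ht with rfl | rfl
      · rw [hr] at hzb; simpa [htb] using hzb
      · rw [hr] at hzc; simpa [htc] using hzc
    · rw [Finset.card_pair htbc]; omega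
  rw [hwt, zero_iff δ tw hδ, hr, hr0]; simp

/-- Cayley–Bacharach for a 3×3 grid of lines -/
lemma cayley_bacharach {F : MvPolynomial (Fin 3) ℂ} (hF : F.IsHomogeneous 3)
    {p11 p12 p13 p21 p22 p23 p31 p32 p33 : Fin 3 → ℂ}
    (r1 : det3 p11 p12 p13 = 0) (r2 : det3 p21 p22 p23 = 0) (r3 : det3 p31 p32 p33 = 0)
    (c1 : det3 p11 p21 p31 = 0) (c2 : det3 p12 p22 p32 = 0) (c3 : det3 p13 p23 p33 = 0)
    (n1 : crs p11 p12 ≠ 0) (n1' : crs p11 p13 ≠ 0) (n1'' : crs p12 p13 ≠ 0)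
    (n2 : crs p21 p22 ≠ 0) (n2' : crs p21 p23 ≠ 0) (n2'' : crs p22 p23 ≠ 0)
    (n3 : crs p31 p32 ≠ 0)
    (d1 : det3 p11 p12 p21 ≠ 0) (d2 : det3 p11 p12 p22 ≠ 0) (d3 : det3 p11 p12 p23 ≠ 0)
    (d4 : det3 p11 p12 p31 ≠ 0) (d5 : det3 p11 p12 p32 ≠ 0)
    (e4 : det3 p21 p22 p31 ≠ 0) (e5 : det3 p21 p22 p32 ≠ 0)
    (z11 : eval p11 F = 0) (z12 : eval p12 F = 0) (z13 : eval p13 F = 0)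
    (z21 : eval p21 F = 0) (z22 : eval p22 F = 0) (z23 : eval p23 F = 0)
    (z31 : eval p31 F = 0) (z32 : eval p32 F = 0) : eval p33 F = 0 := by
  set m1 := crs p11 p21 with hm1
  set m2 := crs p12 p22 with hm2
  set m3 := crs p13 p23 with hm3
  obtain ⟨x, y, hxy⟩ := span_of_det n1 r1
  have hx : x ≠ 0 := by
    rintro rfl; apply n1''; rw [hxy]; simp [crs_smul_right, crs_self]
  have hy : y ≠ 0 := by
    rintro rfl; apply n1'; rw [hxy]; simp [crs_smul_right, crs_self]
  have f12 : dt m1 p12 ≠ 0 := by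
    intro h; apply d1
    have : det3 p11 p12 p21 = - dt m1 p12 := by
      simp only [hm1, det3, dt, crs0, crs1, crs2]; ring
    rw [this, h, neg_zero]
  have f21 : dt m2 p11 ≠ 0 := by
    intro h; apply d2
    have : det3 p11 p12 p22 = dt m2 p11 := by
      simp only [hm2, det3, dt, crs0, crs1, crs2]; ring
    rw [this, h]
  have f31 : dt m3 p11 = y * det3 p11 p12 p23 := by
    simp only [hm3, hxy, det3, dt, crs0, crs1, crs2, Pi.add_apply, Pi.smul_apply, smul_eq_mul]; ring
  have f32 : dt m3 p12 = - x * det3 p11 p12 p23 := by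
    simp only [hm3, hxy, det3, dt, crs0, crs1, crs2, Pi.add_apply, Pi.smul_apply, smul_eq_mul]; ring
  -- a fourth point
  obtain ⟨s, hs⟩ := avoid n1 [p11, p12, p13] (by
    simp [crs_ne_left n1, crs_ne_right n1, crs_ne_right n1'])
  have hwl : dt (crs p11 p12) (p11 + s • p12) = 0 := by
    rw [dt_add, dt_smul, dt_crs_left, dt_crs_right]; simp
  have w1 := hs p11 (by simp)
  have w2 := hs p12 (by simp)
  have w3 := hs p13 (by simp)
  set w := p11 + s • p12 with hw
  have hs0 : s ≠ 0 := by rintro rfl; apply w1; simp [hw, crs_self]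
  have g1 : dt m1 w ≠ 0 := by
    rw [hw, dt_add, dt_smul, hm1, dt_crs_left, zero_add]; exact mul_ne_zero hs0 f12
  have g2 : dt m2 w ≠ 0 := by
    rw [hw, dt_add, dt_smul, hm2, dt_crs_left, mul_zero, add_zero]; exact f21
  have g3 : dt m3 w ≠ 0 := by
    rw [hw, dt_add, dt_smul, f31, f32]
    intro h
    have h' : (y - s * x) * det3 p11 p12 p23 = 0 := by linear_combination h
    rcases mul_eq_zero.1 h' with h' | h'
    · apply w3
      rw [hw, hxy]
      have : y = s * x := by linear_combination h'
      rw [this]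
      have : x • p11 + (s * x) • p12 = x • (p11 + s • p12) := by module
      rw [this, crs_smul_right, crs_self, smul_zero]
    · exact d3 h'
  clear_value w
  set M := lin m1 * lin m2 * lin m3 with hM
  have hMh : M.IsHomogeneous 3 := ((lin_hom m1).mul (lin_hom m2)).mul (lin_hom m3)
  have hMw : eval w M ≠ 0 := by
    simp [hM, g1, g2, g3]
  set c := eval w F / eval w M with hc
  set K := F - C c * M with hK
  have hKh : K.IsHomogeneous 3 := hF.sub (hMh.C_mul c)
  have hKe : ∀ p, eval p K = eval p F - c * (dt m1 p * dt m2 p * dt m3 p) := by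
    intro p; simp [hK, hM]
  have q11 : dt m1 p11 = 0 := dt_crs_left _ _
  have q12 : dt m2 p12 = 0 := dt_crs_left _ _
  have q13 : dt m3 p13 = 0 := dt_crs_left _ _
  have q21 : dt m1 p21 = 0 := dt_crs_right _ _
  have q22 : dt m2 p22 = 0 := dt_crs_right _ _
  have q23 : dt m3 p23 = 0 := dt_crs_right _ _
  have q31 : dt m1 p31 = 0 := c1
  have q32 : dt m2 p32 = 0 := c2
  have q33 : dt m3 p33 = 0 := c3
  have hKl : lin (crs p11 p12) ∣ K := by
    refine lin_dvd_of_line hKh (by norm_num) n1 [w, p11, p12, p13] (by simp) ?_ ?_ ?_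
    · simp [w1, w2, w3, n1, n1', n1'']
    · simp [hwl, dt_crs_left, dt_crs_right]; exact r1
    · simp only [List.mem_cons, List.not_mem_nil, or_false]
      rintro r (rfl | rfl | rfl | rfl)
      · have : eval r M = dt m1 r * dt m2 r * dt m3 r := by simp [hM]
        rw [hKe, ← this, hc]; field_simp; ring
      · rw [hKe, z11, q11]; ring
      · rw [hKe, z12, q12]; ring
      · rw [hKe, z13, q13]; ring
  obtain ⟨Q, hQ⟩ := hKl
  suffices h : eval p33 K = 0 by
    rw [hKe, q33] at h; linear_combination h
  by_cases hK0 : K = 0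
  · rw [hK0]; simp
  obtain ⟨e, he, hQh⟩ := hom_quot hKh hK0 hQ (lin_hom _)
  have : e = 2 := by omega
  subst this
  have hQe : ∀ p, det3 p11 p12 p ≠ 0 → eval p K = 0 → eval p Q = 0 := by
    intro p hp h
    rw [hQ, map_mul, eval_lin] at h
    exact (mul_eq_zero.1 h).resolve_left hp
  have hQl : lin (crs p21 p22) ∣ Q := by
    refine lin_dvd_of_line hQh (by norm_num) n2 [p21, p22, p23] (by simp) ?_ ?_ ?_
    · simp [n2, n2', n2'']
    · simp [dt_crs_left, dt_crs_right]; exact r2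
    · simp only [List.mem_cons, List.not_mem_nil, or_false]
      rintro r (rfl | rfl | rfl)
      · exact hQe _ d1 (by rw [hKe, z21, q21]; ring)
      · exact hQe _ d2 (by rw [hKe, z22, q22]; ring)
      · exact hQe _ d3 (by rw [hKe, z23, q23]; ring)
  obtain ⟨R, hR⟩ := hQl
  have hQ0 : Q ≠ 0 := by rintro rfl; apply hK0; rw [hQ]; simp
  obtain ⟨e, he, hRh⟩ := hom_quot hQh hQ0 hR (lin_hom _)
  have : e = 1 := by omega
  subst this
  have hRe : ∀ p, det3 p11 p12 p ≠ 0 → det3 p21 p22 p ≠ 0 → eval p K = 0 → eval p R = 0 := by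
    intro p hp hp' h
    have := hQe p hp h
    rw [hR, map_mul, eval_lin] at this
    exact (mul_eq_zero.1 this).resolve_left hp'
  have k1 := hRe p31 d4 e4 (by rw [hKe, z31, q31]; ring)
  have k2 := hRe p32 d5 e5 (by rw [hKe, z32, q32]; ring)
  obtain ⟨nn, rfl⟩ := hom_one_eq_lin hRh
  obtain ⟨α, β, hab⟩ := span_of_det n3 r3
  rw [hQ, hR, map_mul, map_mul, eval_lin nn, hab, dt_add, dt_smul, dt_smul]
  rw [eval_lin] at k1 k2
  rw [k1, k2]; ring


/-- space of forms of degree n -/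
abbrev Sf (n : ℕ) : Submodule ℂ (MvPolynomial (Fin 3) ℂ) := homogeneousSubmodule (Fin 3) ℂ n

instance sf_fin (n : ℕ) : FiniteDimensional ℂ (Sf n) :=
  Module.Finite.iff_fg.2 (homogeneousSubmodule_fg (Fin 3) ℂ n)

lemma sf_finrank (n : ℕ) : Module.finrank ℂ (Sf n) = (2 + n).choose n := by
  have h1 := homogeneousSubmodule_eq_finsupp_supported (Fin 3) ℂ n
  have e : Sf n ≃ₗ[ℂ] ({d : Fin 3 →₀ ℕ | d.degree = n} →₀ ℂ) :=
    (LinearEquiv.ofEq _ _ h1).trans (AddMonoidAlgebra.supportedEquivFinsupp _)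
  have hs : {d : Fin 3 →₀ ℕ | d.degree = n} = ↑((Finset.univ : Finset (Fin 3)).finsuppAntidiag n) := by
    ext d
    simp [Finsupp.degree_eq_sum]
  rw [hs] at e
  rw [e.finrank_eq, Module.finrank_finsupp_self]
  have := Finset.card_finsuppAntidiag_nat_eq_choose (s := (Finset.univ : Finset (Fin 3))) n
  simp only [Finset.card_univ, Fintype.card_fin] at this
  simp only [Finset.coe_sort_coe, Fintype.card_coe]
  rw [this]
  congr 1
  omega

/-- evaluation at several points -/
noncomputable def evm {m : ℕ} (v : Fin m → Fin 3 → ℂ) : MvPolynomial (Fin 3) ℂ →ₗ[ℂ] (Fin m → ℂ) :=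
  LinearMap.pi fun i => (aeval (v i) : MvPolynomial (Fin 3) ℂ →ₐ[ℂ] ℂ).toLinearMap

lemma evm_apply {m : ℕ} (v : Fin m → Fin 3 → ℂ) (F) (i) : evm v F i = eval (v i) F := by
  simp [evm, aeval_eq_eval]

lemma exists_cubic (v : Fin 9 → Fin 3 → ℂ) :
    ∃ F : MvPolynomial (Fin 3) ℂ, F ≠ 0 ∧ F.IsHomogeneous 3 ∧ ∀ i, eval (v i) F = 0 := by
  let f := (evm v).comp (Sf 3).subtype
  have h1 := LinearMap.finrank_range_add_finrank_ker f
  have h2 : Module.finrank ℂ (LinearMap.range f) ≤ 9 := by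
    simpa using Submodule.finrank_le (LinearMap.range f)
  rw [sf_finrank] at h1
  have h3 : (2+3).choose 3 = 10 := by decide
  have h4 : 0 < Module.finrank ℂ (LinearMap.ker f) := by omega
  have : Nontrivial (LinearMap.ker f) := Module.nontrivial_of_finrank_pos h4
  obtain ⟨x, hx⟩ := exists_ne (0 : LinearMap.ker f)
  refine ⟨x.1.1, ?_, x.1.2, fun i => ?_⟩
  · intro h; apply hx; ext1; ext1; exact h
  · have := x.2
    rw [LinearMap.mem_ker] at this
    have := congrFun this i
    rw [← evm_apply]; exact this

lemma sep {u v : Fin 3 → ℂ} (h : crs u v ≠ 0) : ∃ n, dt n v = 0 ∧ dt n u ≠ 0 := by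
  rcases vec_ne h with h | h | h
  · refine ⟨crs v ![1,0,0], ?_, ?_⟩
    · exact dt_crs_left _ _
    · intro h'; apply h; rw [crs0, ← h']; simp [dt, crs]; ring
  · refine ⟨crs v ![0,1,0], ?_, ?_⟩
    · exact dt_crs_left _ _
    · intro h'; apply h; rw [crs1, ← h']; simp [dt, crs]; ring
  · refine ⟨crs v ![0,0,1], ?_, ?_⟩
    · exact dt_crs_left _ _
    · intro h'; apply h; rw [crs2, ← h']; simp [dt, crs]; ring

lemma evm_surj (v : Fin 10 → Fin 3 → ℂ) (hv : ∀ i j, i ≠ j → crs (v i) (v j) ≠ 0) :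
    LinearMap.range ((evm v).comp (Sf 9).subtype) = ⊤ := by
  have hn : ∀ i j, ∃ n, i ≠ j → dt n (v j) = 0 ∧ dt n (v i) ≠ 0 := by
    intro i j
    by_cases h : i = j
    · exact ⟨0, fun h' => absurd h h'⟩
    · obtain ⟨n, hn⟩ := sep (hv i j h)
      exact ⟨n, fun _ => hn⟩
  choose n hn using hn
  rw [eq_top_iff, ← Pi.basisFun ℂ (Fin 10) |>.span_eq, Submodule.span_le]
  rintro _ ⟨i, rfl⟩
  let G : MvPolynomial (Fin 3) ℂ := ∏ j ∈ Finset.univ.erase i, lin (n i j)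
  have hG : G.IsHomogeneous 9 := by
    have := IsHomogeneous.prod (Finset.univ.erase i) (fun j => lin (n i j)) (fun _ => 1)
      (fun j _ => lin_hom _)
    simpa using this
  have hGi : eval (v i) G ≠ 0 := by
    simp only [G, map_prod, eval_lin]
    rw [Finset.prod_ne_zero_iff]
    intro j hj
    exact (hn i j (Finset.ne_of_mem_erase hj).symm).2
  have hGj : ∀ j, j ≠ i → eval (v j) G = 0 := by
    intro j hj
    simp only [G, map_prod, eval_lin]
    exact Finset.prod_eq_zero (Finset.mem_erase.2 ⟨hj, Finset.mem_univ _⟩) (hn i j hj.symm).1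
  refine ⟨(eval (v i) G)⁻¹ • ⟨G, hG⟩, ?_⟩
  funext j
  simp only [map_smul, LinearMap.comp_apply, Submodule.subtype_apply, Pi.smul_apply, evm_apply,
    Pi.basisFun_apply]
  by_cases h : j = i
  · subst h; simp [hGi]
  · simp [hGj j h, h]

lemma bezout {F G : MvPolynomial (Fin 3) ℂ} {e : ℕ} (he : e = 2 ∨ e = 3)
    (hF : F.IsHomogeneous e) (hi : Irreducible F) (hG : G.IsHomogeneous 3)
    (v : Fin 10 → Fin 3 → ℂ) (hv : ∀ i j, i ≠ j → crs (v i) (v j) ≠ 0)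
    (zF : ∀ i, eval (v i) F = 0) (zG : ∀ i, eval (v i) G = 0) : F ∣ G := by
  by_contra hdiv
  have hF0 := hi.ne_zero
  have hp : Prime F := hi.prime
  have hae : 9 - e + e = 9 := by omega
  let T : (Sf (9-e) × Sf 6) →ₗ[ℂ] MvPolynomial (Fin 3) ℂ :=
    LinearMap.coprod ((LinearMap.mulLeft ℂ F).comp (Sf (9-e)).subtype)
      ((LinearMap.mulLeft ℂ G).comp (Sf 6).subtype)
  have hT : ∀ x, T x = F * x.1.1 + G * x.2.1 := fun x => by simp [T]
  let f := (evm v).comp (Sf 9).subtype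
  have hf := LinearMap.finrank_range_add_finrank_ker f
  rw [evm_surj v hv, finrank_top, Module.finrank_fin_fun, sf_finrank] at hf
  let K := (LinearMap.ker f).map (Sf 9).subtype
  have hK : Module.finrank ℂ K = Module.finrank ℂ (LinearMap.ker f) :=
    (LinearEquiv.finrank_eq (Submodule.equivMapOfInjective _ (Submodule.subtype_injective _) _)).symm
  have hTK : LinearMap.range T ≤ K := by
    rintro _ ⟨x, rfl⟩
    have hx : (T x).IsHomogeneous 9 := by
      rw [hT]
      refine IsHomogeneous.add ?_ ?_
      · have := IsHomogeneous.mul hF ((mem_homogeneousSubmodule _ _).1 x.1.2)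
        rwa [add_comm, hae] at this
      · exact IsHomogeneous.mul hG ((mem_homogeneousSubmodule _ _).1 x.2.2)
    refine ⟨⟨T x, hx⟩, ?_, rfl⟩
    rw [SetLike.mem_coe, LinearMap.mem_ker]
    funext i
    simp only [f, LinearMap.comp_apply, Submodule.subtype_apply, evm_apply]
    rw [hT]; simp [zF, zG]
  have h1 := LinearMap.finrank_range_add_finrank_ker T
  have h2 := Submodule.finrank_mono hTK
  let J : Sf (6-e) →ₗ[ℂ] MvPolynomial (Fin 3) ℂ × MvPolynomial (Fin 3) ℂ := 
    (LinearMap.prod (LinearMap.mulLeft ℂ (-G)) (LinearMap.mulLeft ℂ F)).comp (Sf (6-e)).subtype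
  have hker : (LinearMap.ker T).map (LinearMap.prodMap (Sf (9-e)).subtype (Sf 6).subtype) ≤ LinearMap.range J := by
    rintro _ ⟨x, hx, rfl⟩
    rw [SetLike.mem_coe, LinearMap.mem_ker, hT] at hx
    have hd : F ∣ G * x.2.1 := by
      have : G * x.2.1 = F * (- x.1.1) := by linear_combination hx
      exact ⟨_, this⟩
    obtain ⟨k, hk⟩ := (hp.dvd_or_dvd hd).resolve_left hdiv
    have hk6 : k.IsHomogeneous (6 - e) := by
      by_cases h0 : x.2.1 = 0
      · rw [h0] at hk
        have : k = 0 := by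
          rcases mul_eq_zero.1 hk.symm with h | h
          · exact absurd h hF0
          · exact h
        rw [this]; exact isHomogeneous_zero _ _ _
      · obtain ⟨b, hb, hkb⟩ := hom_quot ((mem_homogeneousSubmodule _ _).1 x.2.2) h0 hk hF
        have : b = 6 - e := by omega
        rwa [← this]
    refine ⟨⟨k, hk6⟩, ?_⟩
    have hx1 : x.1.1 = - G * k := by
      apply mul_left_cancel₀ hF0
      rw [hk] at hx
      linear_combination hx
    simp [J, ← hk]
    rw [hx1]; ring
  have hinj : Function.Injective (LinearMap.prodMap (Sf (9-e)).subtype (Sf 6).subtype) := by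
    rintro ⟨a, b⟩ ⟨c, d⟩ h
    simpa using h
  have h3 := Submodule.finrank_mono hker
  rw [← LinearEquiv.finrank_eq (Submodule.equivMapOfInjective _ hinj _)] at h3
  have h4 := LinearMap.finrank_range_le J
  rw [Module.finrank_prod, sf_finrank, sf_finrank] at h1
  rw [sf_finrank] at h4
  have c1 : (2 + 9).choose 9 = 55 := by decide
  have c2 : (2 + 6).choose 6 = 28 := by decide
  rcases he with rfl | rfl
  · have c3 : (2 + (9 - 2)).choose (9 - 2) = 36 := by decide
    have c4 : (2 + (6 - 2)).choose (6 - 2) = 15 := by decide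
    omega
  · have c3 : (2 + (9 - 3)).choose (9 - 3) = 28 := by decide
    have c4 : (2 + (6 - 3)).choose (6 - 3) = 10 := by decide
    omega


/-- vectors -/
abbrev Vec : Type := Fin 3 → ℂ

/-- three-net in terms of representatives -/
structure Net {H : Type} [AddCommGroup H] (P : Fin 3 → H → Vec) : Prop where
  indep : ∀ i j x y, (i ≠ j ∨ x ≠ y) → crs (P i x) (P j y) ≠ 0
  col : ∀ i j k x y z, i ≠ j → j ≠ k → i ≠ k → (det3 (P i x) (P j y) (P k z) = 0 ↔ x + y + z = 0)

lemma Net.perm {H : Type} [AddCommGroup H] {P : Fin 3 → H → Vec} (hP : Net P)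
    (σ : Equiv.Perm (Fin 3)) : Net (fun i => P (σ i)) where
  indep i j x y h := hP.indep _ _ _ _ (h.imp (fun h => σ.injective.ne h) id)
  col i j k x y z h1 h2 h3 := hP.col _ _ _ _ _ _ (σ.injective.ne h1) (σ.injective.ne h2) (σ.injective.ne h3)

lemma third {i j : Fin 3} (h : i ≠ j) : ∃ k, j ≠ k ∧ i ≠ k := by
  revert i j; decide

lemma Net.mix {H : Type} [AddCommGroup H] {P : Fin 3 → H → Vec} (hP : Net P) {i j : Fin 3}
    {x x' y : H} (hij : i ≠ j) (hx : x ≠ x') : det3 (P i x) (P i x') (P j y) ≠ 0 := by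
  intro h
  obtain ⟨k, h1, h2⟩ := third hij
  have hc : det3 (P i x) (P j y) (P k (-x-y)) = 0 := (hP.col i j k _ _ _ hij h1 h2).2 (by abel)
  have hn := hP.indep i j x y (Or.inl hij)
  have h3 : det3 (P i x') (P j y) (P k (-x-y)) = 0 := by
    refine det_of_form hn ?_ (dt_crs_right _ _) hc
    have := det_swap (P i x) (P j y) (P i x')
    have h5 := det_cyc (P j y) (P i x) (P i x')
    unfold det3 at *
    rw [← neg_eq_zero, ← this, ← h5]; exact h
  rw [hP.col i j k _ _ _ hij h1 h2] at h3
  apply hx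
  have : x' - x = 0 := by rw [← h3]; abel
  exact (sub_eq_zero.1 this).symm

/-- a progression -/
structure Prog (u : Fin 3 → ℤ → Vec) : Prop where
  indep : ∀ i j r s, i ≠ j → crs (u i r) (u j s) ≠ 0
  indep' : ∀ i r s, r ≠ s → |r - s| < 10 → crs (u i r) (u i s) ≠ 0
  col : ∀ i j k r s t, i ≠ j → j ≠ k → i ≠ k → r + s + t = 0 → det3 (u i r) (u j s) (u k t) = 0
  ncol : ∀ i j k r s t, i ≠ j → j ≠ k → i ≠ k → r + s + t ≠ 0 → |r + s + t| < 10 →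
    det3 (u i r) (u j s) (u k t) ≠ 0
  mix : ∀ i j r s t, i ≠ j → r ≠ s → |r - s| < 10 → det3 (u i r) (u i s) (u j t) ≠ 0

lemma Prog.neg {u : Fin 3 → ℤ → Vec} (hu : Prog u) : Prog (fun i r => u i (-r)) where
  indep i j r s h := hu.indep i j _ _ h
  indep' i r s h h' := hu.indep' i _ _ (by omega) (by rw [abs_lt] at *; omega)
  col i j k r s t h1 h2 h3 h := hu.col i j k _ _ _ h1 h2 h3 (by omega)
  ncol i j k r s t h1 h2 h3 h h' := hu.ncol i j k _ _ _ h1 h2 h3 (by omega) (by rw [abs_lt] at *; omega)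
  mix i j r s t h h1 h2 := hu.mix i j _ _ _ h (by omega) (by rw [abs_lt] at *; omega)

lemma zs_ne {H : Type} [AddCommGroup H] {h : H} (ho : 10 ≤ addOrderOf h) {m : ℤ}
    (hm : m ≠ 0) (hm' : |m| < 10) : m • h ≠ 0 := by
  intro hz
  have := addOrderOf_dvd_iff_zsmul_eq_zero.2 hz
  have h1 := Int.le_of_dvd (abs_pos.2 hm) ((dvd_abs _ _).2 this)
  omega

lemma Net.prog {H : Type} [AddCommGroup H] {P : Fin 3 → H → Vec} (hP : Net P) {h : H}
    (ho : 10 ≤ addOrderOf h) {b : Fin 3 → H} (hb : b 0 + b 1 + b 2 = 0) :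
    Prog (fun i (r : ℤ) => P i (b i + r • h)) := by
  have key : ∀ i j k, i ≠ j → j ≠ k → i ≠ k → b i + b j + b k = 0 := by
    intro i j k h1 h2 h3
    have e : b i + b j + b k = b 0 + b 1 + b 2 := by
      clear hb
      fin_cases i <;> fin_cases j <;> fin_cases k <;> simp at h1 h2 h3 ⊢ <;> abel
    rw [e, hb]
  have inj : ∀ (x : H) (r s : ℤ), r ≠ s → |r - s| < 10 → x + r • h ≠ x + s • h := by
    intro x r s h1 h2 h3
    apply zs_ne ho (sub_ne_zero.2 h1) h2
    rw [sub_smul, sub_eq_zero]; exact add_left_cancel h3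
  have sm : ∀ i j k (r s t : ℤ), i ≠ j → j ≠ k → i ≠ k → 
      (b i + r • h) + (b j + s • h) + (b k + t • h) = (r+s+t) • h := by
    intro i j k r s t h1 h2 h3
    have := key i j k h1 h2 h3
    calc _ = (b i + b j + b k) + (r+s+t) • h := by simp only [add_smul]; abel
      _ = _ := by rw [this, zero_add]
  refine ⟨fun i j r s h => hP.indep _ _ _ _ (Or.inl h), fun i r s h1 h2 => hP.indep _ _ _ _ (Or.inr (inj _ _ _ h1 h2)), ?_, ?_,
    fun i j r s t h1 h2 h3 => hP.mix h1 (inj _ _ _ h2 h3)⟩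
  · intro i j k r s t h1 h2 h3 h4
    rw [hP.col i j k _ _ _ h1 h2 h3, sm i j k _ _ _ h1 h2 h3, h4, zero_smul]
  · intro i j k r s t h1 h2 h3 h4 h5
    rw [Ne, hP.col i j k _ _ _ h1 h2 h3, sm i j k _ _ _ h1 h2 h3]
    exact zs_ne ho h4 h5

lemma dcyc {u v w : Vec} (h : det3 u v w ≠ 0) : det3 v w u ≠ 0 := by rwa [det_cyc]
lemma dsw {u v w : Vec} (h : det3 u v w ≠ 0) : det3 v u w ≠ 0 := by rw [det_swap]; simpa using h

lemma grid {u : Fin 3 → ℤ → Vec} (hu : Prog u) {F : MvPolynomial (Fin 3) ℂ} (hF : F.IsHomogeneous 3)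
    {i j k : Fin 3} (h1 : i ≠ j) (h2 : j ≠ k) (h3 : i ≠ k) (r s t : ℤ) (hs : r + s + t = -3)
    (hA : ∀ p, r ≤ p → p ≤ r + 2 → eval (u i p) F = 0)
    (hB : ∀ p, s ≤ p → p ≤ s + 2 → eval (u j p) F = 0)
    (hC : ∀ p, t + 1 ≤ p → p ≤ t + 2 → eval (u k p) F = 0) : eval (u k t) F = 0 := by
  refine cayley_bacharach hF (p11 := u j s) (p12 := u k (t+1)) (p13 := u i (r+2))
    (p21 := u k (t+2)) (p22 := u i r) (p23 := u j (s+1)) (p31 := u i (r+1)) (p32 := u j (s+2))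
    (hu.col j k i _ _ _ h2 h3.symm h1.symm (by omega))
    (hu.col k i j _ _ _ h3.symm h1 h2.symm (by omega))
    (hu.col i j k _ _ _ h1 h2 h3 (by omega))
    (hu.col j k i _ _ _ h2 h3.symm h1.symm (by omega))
    (hu.col k i j _ _ _ h3.symm h1 h2.symm (by omega))
    (hu.col i j k _ _ _ h1 h2 h3 (by omega))
    (hu.indep _ _ _ _ h2) (hu.indep _ _ _ _ h1.symm) (hu.indep _ _ _ _ h3.symm)
    (hu.indep _ _ _ _ h3.symm) (hu.indep _ _ _ _ h2.symm) (hu.indep _ _ _ _ h1)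
    (hu.indep _ _ _ _ h1)
    (dcyc (dcyc (hu.mix k j _ _ _ h2.symm (by omega) (by rw [abs_lt]; omega))))
    (hu.ncol j k i _ _ _ h2 h3.symm h1.symm (by omega) (by rw [abs_lt]; omega))
    (dcyc (hu.mix j k _ _ _ h2 (by omega) (by rw [abs_lt]; omega)))
    (hu.ncol j k i _ _ _ h2 h3.symm h1.symm (by omega) (by rw [abs_lt]; omega))
    (dcyc (hu.mix j k _ _ _ h2 (by omega) (by rw [abs_lt]; omega)))
    (dcyc (dcyc (hu.mix i k _ _ _ h3 (by omega) (by rw [abs_lt]; omega))))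
    (hu.ncol k i j _ _ _ h3.symm h1 h2.symm (by omega) (by rw [abs_lt]; omega))
    ?_ ?_ ?_ ?_ ?_ ?_ ?_ ?_
  · apply hB <;> omega
  · apply hC <;> omega
  · apply hA <;> omega
  · apply hC <;> omega
  · apply hA <;> omega
  · apply hB <;> omega
  · apply hA <;> omega
  · apply hB <;> omega

lemma grid_hi {u : Fin 3 → ℤ → Vec} (hu : Prog u) {F : MvPolynomial (Fin 3) ℂ} (hF : F.IsHomogeneous 3)
    {i j k : Fin 3} (h1 : i ≠ j) (h2 : j ≠ k) (h3 : i ≠ k) (r s t : ℤ) (hs : r + s + t = -3)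
    (hA : ∀ p, r ≤ p → p ≤ r + 2 → eval (u i p) F = 0)
    (hB : ∀ p, s ≤ p → p ≤ s + 2 → eval (u j p) F = 0)
    (hC : ∀ p, t ≤ p → p ≤ t + 1 → eval (u k p) F = 0) : eval (u k (t+2)) F = 0 := by
  have := grid hu.neg hF h1 h2 h3 (-(r+2)) (-(s+2)) (-(t+2)) (by omega)
    (fun p _ _ => hA _ (by omega) (by omega)) (fun p _ _ => hB _ (by omega) (by omega))
    (fun p _ _ => hC _ (by omega) (by omega))
  simpa only [neg_neg] using this

lemma prog_cubic {u : Fin 3 → ℤ → Vec} (hu : Prog u) {F : MvPolynomial (Fin 3) ℂ} (hF : F.IsHomogeneous 3)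
    (hA : ∀ p, 0 ≤ p → p ≤ 3 → eval (u 0 p) F = 0)
    (hB : ∀ p, 0 ≤ p → p ≤ 2 → eval (u 1 p) F = 0)
    (hC : ∀ p, -2 ≤ p → p ≤ -1 → eval (u 2 p) F = 0) (m : ℕ) (hm : 3 ≤ m) : 
    (∀ p : ℤ, 0 ≤ p → p ≤ m → eval (u 0 p) F = 0) ∧ (∀ p : ℤ, 0 ≤ p → p ≤ m → eval (u 1 p) F = 0) ∧
    (∀ p : ℤ, -(2*m-1) ≤ p → p ≤ -1 → eval (u 2 p) F = 0) := by
  have d01 : (0 : Fin 3) ≠ 1 := by decide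
  have d12 : (1 : Fin 3) ≠ 2 := by decide
  have d02 : (0 : Fin 3) ≠ 2 := by decide
  have ext2 : ∀ (i : Fin 3) (a b c : ℤ), (∀ p, a ≤ p → p ≤ b → eval (u i p) F = 0) → eval (u i c) F = 0 →
     c = b + 1 → ∀ p, a ≤ p → p ≤ c → eval (u i p) F = 0 := by
    intro i a b c h1 h2 h3 p h4 h5
    rcases eq_or_lt_of_le h5 with h | h
    · rw [h]; exact h2
    · exact h1 p h4 (by omega)
  have ext1 : ∀ (i : Fin 3) (a b c : ℤ), (∀ p, a ≤ p → p ≤ b → eval (u i p) F = 0) → eval (u i c) F = 0 →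
     c = a - 1 → ∀ p, c ≤ p → p ≤ b → eval (u i p) F = 0 := by
    intro i a b c h1 h2 h3 p h4 h5
    rcases eq_or_lt_of_le h4 with h | h
    · rw [← h]; exact h2
    · exact h1 p (by omega) h5
  induction m, hm using Nat.le_induction with
  | base =>
    have c3 := ext1 2 _ _ _ hC (grid hu hF d01 d12 d02 0 0 (-3) (by omega)
      (fun p _ _ => hA p (by omega) (by omega)) (fun p _ _ => hB p (by omega) (by omega))
      (fun p _ _ => hC p (by omega) (by omega))) (by omega)
    have c4 := ext1 2 _ _ _ c3 (grid hu hF d01 d12 d02 1 0 (-4) (by omega)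
      (fun p _ _ => hA p (by omega) (by omega)) (fun p _ _ => hB p (by omega) (by omega))
      (fun p _ _ => c3 p (by omega) (by omega))) (by omega)
    have b3 := ext2 1 _ _ _ hB (grid_hi hu hF d02 d12.symm d01 0 (-4) 1 (by omega)
      (fun p _ _ => hA p (by omega) (by omega)) (fun p _ _ => c4 p (by omega) (by omega))
      (fun p _ _ => hB p (by omega) (by omega))) (by omega)
    have c5 := ext1 2 _ _ _ c4 (grid hu hF d01 d12 d02 1 1 (-5) (by omega)
      (fun p _ _ => hA p (by omega) (by omega)) (fun p _ _ => b3 p (by omega) (by omega))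
      (fun p _ _ => c4 p (by omega) (by omega))) (by omega)
    exact ⟨fun p _ _ => hA p (by omega) (by omega), fun p _ _ => b3 p (by omega) (by omega),
      fun p _ _ => c5 p (by omega) (by omega)⟩
  | succ m hm ih =>
    obtain ⟨a, b, c⟩ := ih
    have a' := ext2 0 _ _ _ a (grid_hi hu hF d12 d02.symm d01.symm 0 (-(m+2)) (m-1) (by omega)
      (fun p _ _ => b p (by omega) (by omega)) (fun p _ _ => c p (by omega) (by omega))
      (fun p _ _ => a p (by omega) (by omega))) (by omega)
    have b' := ext2 1 _ _ _ b (grid_hi hu hF d02 d12.symm d01 0 (-(m+2)) (m-1) (by omega)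
      (fun p _ _ => a p (by omega) (by omega)) (fun p _ _ => c p (by omega) (by omega))
      (fun p _ _ => b p (by omega) (by omega))) (by omega)
    have c1 := ext1 2 _ _ _ c (grid hu hF d01 d12 d02 (m-1) (m-2) (-2*m) (by omega)
      (fun p _ _ => a' p (by omega) (by omega)) (fun p _ _ => b' p (by omega) (by omega))
      (fun p _ _ => c p (by omega) (by omega))) (by omega)
    have c2 := ext1 2 _ _ _ c1 (grid hu hF d01 d12 d02 (m-1) (m-1) (-2*m-1) (by omega)
      (fun p _ _ => a' p (by omega) (by omega)) (fun p _ _ => b' p (by omega) (by omega))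
      (fun p _ _ => c1 p (by omega) (by omega))) (by omega)
    exact ⟨fun p _ _ => a' p (by omega) (by push_cast at *; omega), fun p _ _ => b' p (by omega) (by push_cast at *; omega),
      fun p _ _ => c2 p (by push_cast at *; omega) (by omega)⟩

lemma Net.cubic {H : Type} [AddCommGroup H] [Finite H] {P : Fin 3 → H → Vec} (hP : Net P) {h : H}
    (ho : 10 ≤ addOrderOf h) {b : Fin 3 → H} (hb : b 0 + b 1 + b 2 = 0) :
    ∃ F : MvPolynomial (Fin 3) ℂ, F ≠ 0 ∧ F.IsHomogeneous 3 ∧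
      ∀ i (r : ℤ), eval (P i (b i + r • h)) F = 0 := by
  have hu := hP.prog ho hb
  set u : Fin 3 → ℤ → Vec := fun i (r : ℤ) => P i (b i + r • h) with hudef
  obtain ⟨F, h0, hF, hz⟩ := exists_cubic ![u 0 0, u 0 1, u 0 2, u 0 3, u 1 0, u 1 1, u 1 2, u 2 (-1), u 2 (-2)]
  refine ⟨F, h0, hF, ?_⟩
  have hA : ∀ p, 0 ≤ p → p ≤ 3 → eval (u 0 p) F = 0 := by
    intro p h1 h2
    interval_cases p
    exacts [hz 0, hz 1, hz 2, hz 3]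
  have hB : ∀ p, 0 ≤ p → p ≤ 2 → eval (u 1 p) F = 0 := by
    intro p h1 h2
    interval_cases p
    exacts [hz 4, hz 5, hz 6]
  have hC : ∀ p, -2 ≤ p → p ≤ -1 → eval (u 2 p) F = 0 := by
    intro p h1 h2
    interval_cases p
    exacts [hz 8, hz 7]
  obtain ⟨a1, a2, a3⟩ := prog_cubic hu hF hA hB hC (addOrderOf h) (by omega)
  have per : ∀ i (r : ℤ), u i r = u i (r % (addOrderOf h : ℤ)) := by
    intro i r
    simp only [hudef]
    rw [mod_addOrderOf_zsmul]
  have hpos : (0:ℤ) < (addOrderOf h : ℤ) := by omega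
  have per' : ∀ i (r : ℤ), u i r = u i (r % (addOrderOf h : ℤ) - (addOrderOf h : ℤ)) := by
    intro i r
    rw [per, per i (_ - _)]; simp
  intro i r
  change eval (u i r) F = 0
  have e1 := Int.emod_nonneg r hpos.ne'
  have e2 := Int.emod_lt_of_pos r hpos
  fin_cases i
  · show eval (u 0 r) F = 0
    rw [per]; exact a1 _ e1 (by omega)
  · show eval (u 1 r) F = 0
    rw [per]; exact a2 _ e1 (by omega)
  · show eval (u 2 r) F = 0
    rw [per']; exact a3 _ (by omega) (by omega)


lemma sum3 {H : Type} [AddCommGroup H] (b : Fin 3 → H) {i j k : Fin 3} (h1 : i ≠ j) (h2 : j ≠ k)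
    (h3 : i ≠ k) : b i + b j + b k = b 0 + b 1 + b 2 := by
  fin_cases i <;> fin_cases j <;> fin_cases k <;> simp at h1 h2 h3 ⊢ <;> abel

lemma exists_base {H : Type} [AddCommGroup H] {i j k : Fin 3} (h1 : i ≠ j) (h2 : j ≠ k)
    (h3 : i ≠ k) (x y : H) : ∃ b : Fin 3 → H, b 0 + b 1 + b 2 = 0 ∧ b i = x ∧ b j = y ∧ b k = -x-y := by
  refine ⟨fun t => if t = i then x else if t = j then y else -x-y, ?_, ?_, ?_, ?_⟩
  · rw [← sum3 (fun t => if t = i then x else if t = j then y else -x-y) h1 h2 h3]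
    simp [h1.symm, h2.symm, h3.symm]
  · simp
  · simp [h1.symm]
  · simp [h2.symm, h3.symm]

lemma case_irred {H : Type} [AddCommGroup H] [Finite H] {P : Fin 3 → H → Vec} (hP : Net P) {h : H}
    (ho : 10 ≤ addOrderOf h) {b : Fin 3 → H} (hb : b 0 + b 1 + b 2 = 0)
    {F : MvPolynomial (Fin 3) ℂ} (hF : F.IsHomogeneous 3) (hi : Irreducible F)
    (hz : ∀ i (r : ℤ), eval (P i (b i + r • h)) F = 0) (i : Fin 3) (x : H) : eval (P i x) F = 0 := by
  obtain ⟨j, hij⟩ : ∃ j, i ≠ j := by revert i; decide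
  obtain ⟨k, h2, h3⟩ := third hij
  obtain ⟨b', hb', h4, h5, -⟩ := exists_base hij h2 h3 x (b j)
  obtain ⟨F', h0', hF', hz'⟩ := hP.cubic ho hb'
  have hu := hP.prog ho hb
  have hd : F ∣ F' := by
    refine bezout (Or.inr rfl) hF hi hF' (fun r : Fin 10 => P j (b j + (r.1 : ℤ) • h)) ?_ ?_ ?_
    · intro r s hrs
      refine hu.indep' j r.1 s.1 ?_ ?_
      · intro h; apply hrs; ext; exact_mod_cast h
      · rw [abs_lt]; omega
    · intro r; exact hz j _
    · intro r; rw [← h5]; exact hz' j _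
  obtain ⟨K, hK⟩ := hd
  obtain ⟨c, hc, hKh⟩ := hom_quot hF' h0' hK hF
  have : c = 0 := by omega
  subst this
  have hu' := (hom_zero_unit hKh (by rintro rfl; simp at hK; exact h0' hK)).map (eval (P i x))
  have := hz' i 0
  rw [zero_smul, add_zero, h4, hK, map_mul] at this
  exact (mul_eq_zero.1 this).resolve_right hu'.ne_zero

/-- line and conic data -/
structure ConicData (u : Fin 3 → ℤ → Vec) (l : Vec) (Q : MvPolynomial (Fin 3) ℂ) (i : Fin 3) : Prop where
  on : ∀ r, dt l (u i r) = 0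
  offQ : ∀ r, eval (u i r) Q ≠ 0
  off : ∀ j, j ≠ i → ∀ r, dt l (u j r) ≠ 0
  onQ : ∀ j, j ≠ i → ∀ r, eval (u j r) Q = 0

lemma Prog.line_two {u : Fin 3 → ℤ → Vec} (hu : Prog u) {l : Vec} (hl : l ≠ 0) {i j : Fin 3} (hij : i ≠ j) 
    {r s t : ℤ} (h1 : r ≠ s) (h2 : |r - s| < 10) (h3 : dt l (u i r) = 0) (h4 : dt l (u i s) = 0) :
    dt l (u j t) ≠ 0 := by
  intro h5
  exact hu.mix i j r s t hij h1 h2 (det_of_form hl h3 h4 h5)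

lemma pig {A B C D E F : Prop} (a1 : A → ¬ B) (a2 : A → ¬ C) (a3 : B → ¬ C) (b1 : D → ¬ E)
    (b2 : D → ¬ F) (b3 : E → ¬ F) (c1 : ¬ A → D) (c2 : ¬ B → E) (c3 : ¬ C → F) : False := by tauto

lemma conic_class {u : Fin 3 → ℤ → Vec} (hu : Prog u) {l : Vec} (hl : l ≠ 0)
    {Q : MvPolynomial (Fin 3) ℂ} (hQ : Q.IsHomogeneous 2) (hi : Irreducible Q)
    (hz : ∀ i r, dt l (u i r) = 0 ∨ eval (u i r) Q = 0) : ∃ i, ConicData u l Q i := by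
  have notall : ∀ i j k r s t, i ≠ j → j ≠ k → i ≠ k → r + s + t = 0 → eval (u i r) Q = 0 →
      eval (u j s) Q = 0 → eval (u k t) Q = 0 → False := by
    intro i j k r s t h1 h2 h3 h4 h5 h6 h7
    exact conic_no_three hQ hi (hu.indep _ _ _ _ h1) (hu.indep _ _ _ _ h3) (hu.indep _ _ _ _ h2)
      (hu.col i j k r s t h1 h2 h3 h4) h5 h6 h7
  by_cases hA : ∃ i r s, r ≠ s ∧ |r - s| < 10 ∧ dt l (u i r) = 0 ∧ dt l (u i s) = 0
  · obtain ⟨i, r, s, h1, h2, h3, h4⟩ := hA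
    have off : ∀ j, j ≠ i → ∀ t, dt l (u j t) ≠ 0 := fun j hj t => hu.line_two hl hj.symm h1 h2 h3 h4
    have onQ : ∀ j, j ≠ i → ∀ t, eval (u j t) Q = 0 := fun j hj t => (hz j t).resolve_left (off j hj t)
    have offQ : ∀ t, eval (u i t) Q ≠ 0 := by
      intro t ht
      obtain ⟨j, hij⟩ : ∃ j, i ≠ j := by clear * -; revert i; decide
      obtain ⟨k, h5, h6⟩ := third hij
      exact notall i j k t (-t) 0 hij h5 h6 (by omega) ht (onQ j hij.symm _) (onQ k h6.symm _)
    exact ⟨i, fun t => (hz i t).resolve_right (offQ t), offQ, off, onQ⟩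
  · exfalso
    push Not at hA
    obtain ⟨r, hr0, hr⟩ : ∃ r : ℤ, (r = 0 ∨ r = 1) ∧ dt l (u 0 r) ≠ 0 := by
      by_cases h : dt l (u 0 0) = 0
      · exact ⟨1, Or.inr rfl, hA 0 0 1 (by norm_num) (by norm_num) h⟩
      · exact ⟨0, Or.inl rfl, h⟩
    obtain ⟨s, hs, hs'⟩ : ∃ s : ℤ, dt l (u 1 s) ≠ 0 ∧ dt l (u 2 (-r-s)) ≠ 0 := by
      by_contra hc
      push Not at hc
      have g1 := fun a b h1 h2 h => hA 1 a b h1 h2 h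
      have g2 := fun a b h1 h2 h => hA 2 a b h1 h2 h
      have a1 := g1 0 1 (by norm_num) (by norm_num)
      have a2 := g1 0 2 (by norm_num) (by norm_num)
      have a3 := g1 1 2 (by norm_num) (by norm_num)
      have b1 := g2 (-r-0) (-r-1) (by omega) (by rw [abs_lt]; omega)
      have b2 := g2 (-r-0) (-r-2) (by omega) (by rw [abs_lt]; omega)
      have b3 := g2 (-r-1) (-r-2) (by omega) (by rw [abs_lt]; omega)
      have c1 := hc 0
      have c2 := hc 1
      have c3 := hc 2
      exact pig a1 a2 a3 b1 b2 b3 c1 c2 c3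
    exact notall 0 1 2 r s (-r-s) (by decide) (by decide) (by decide) (by omega)
      ((hz _ _).resolve_left hr) ((hz _ _).resolve_left hs) ((hz _ _).resolve_left hs')

def pasc (w : ℤ → Vec) (m : ℤ) : Vec := crs (crs (w m) (w (m+3))) (crs (w (m+1)) (w (m+2)))

lemma ConicData.gen {u : Fin 3 → ℤ → Vec} (hu : Prog u) {l : Vec}
    {Q : MvPolynomial (Fin 3) ℂ} (hQ : Q.IsHomogeneous 2) (hi : Irreducible Q)
    {i j : Fin 3} (hc : ConicData u l Q i) (hij : j ≠ i) {r s t : ℤ} (h1 : r ≠ s) (h2 : |r - s| < 10)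
    (h3 : r ≠ t) (h4 : |r - t| < 10) (h5 : s ≠ t) (h6 : |s - t| < 10) :
    det3 (u j r) (u j s) (u j t) ≠ 0 := fun h =>
  conic_no_three hQ hi (hu.indep' _ _ _ h1 h2) (hu.indep' _ _ _ h3 h4) (hu.indep' _ _ _ h5 h6) h
    (hc.onQ j hij _) (hc.onQ j hij _) (hc.onQ j hij _)

lemma pasc_eq (w : ℤ → Vec) (m : ℤ) : pasc w m = det3 (w (m+1)) (w (m+2)) (w m) • w (m+3)
    - det3 (w (m+1)) (w (m+2)) (w (m+3)) • w m := crs_crs _ _ _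

lemma pascal {u : Fin 3 → ℤ → Vec} (hu : Prog u) {l : Vec}
    {Q : MvPolynomial (Fin 3) ℂ} (hQ : Q.IsHomogeneous 2) (hi : Irreducible Q)
    {i j : Fin 3} (hc : ConicData u l Q i) (hij : j ≠ i) (m : ℤ) :
    pasc (u j) m ≠ 0 ∧ dt l (pasc (u j) m) = 0 := by
  obtain ⟨k, h1, h2⟩ := third hij
  have g1 : det3 (u j (m+1)) (u j (m+2)) (u j m) ≠ 0 := hc.gen hu hQ hi hij (by omega) (by rw [abs_lt]; omega)
    (by omega) (by rw [abs_lt]; omega) (by omega) (by rw [abs_lt]; omega)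
  have g2 : det3 (u j (m+1)) (u j (m+2)) (u j (m+3)) ≠ 0 := hc.gen hu hQ hi hij (by omega) (by rw [abs_lt]; omega)
    (by omega) (by rw [abs_lt]; omega) (by omega) (by rw [abs_lt]; omega)
  have n03 : crs (u j m) (u j (m+3)) ≠ 0 := hu.indep' _ _ _ (by omega) (by rw [abs_lt]; omega)
  have n0 : crs (u j m) (pasc (u j) m) ≠ 0 := by
    have : crs (u j m) (pasc (u j) m) = det3 (u j (m+1)) (u j (m+2)) (u j m) • crs (u j m) (u j (m+3)) := by
      rw [pasc_eq, sub_eq_add_neg, crs_add_right, ← neg_smul, crs_smul_right, crs_smul_right, crs_self]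
      simp
    rw [this]; exact smul_ne_zero g1 n03
  have n3 : crs (u j (m+3)) (pasc (u j) m) ≠ 0 := by
    have : crs (u j (m+3)) (pasc (u j) m) = det3 (u j (m+1)) (u j (m+2)) (u j (m+3)) • crs (u j m) (u j (m+3)) := by
      rw [pasc_eq, sub_eq_add_neg, crs_add_right, ← neg_smul, crs_smul_right, crs_smul_right, crs_self,
        crs_swap (u j m)]
      simp
    rw [this]; exact smul_ne_zero g2 n03
  have hX : pasc (u j) m ≠ 0 := crs_ne_right n0
  refine ⟨hX, ?_⟩
  have hd : det3 (u j m) (u j (m+3)) (pasc (u j) m) = 0 := by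
    rw [det3, dt_comm]; exact dt_crs_left _ _
  have hd' : det3 (u j (m+1)) (u j (m+2)) (pasc (u j) m) = 0 := by
    rw [det3, dt_comm]; exact dt_crs_right _ _
  have hQX : eval (pasc (u j) m) Q ≠ 0 := fun h =>
    conic_no_three hQ hi n03 n0 n3 hd (hc.onQ j hij _) (hc.onQ j hij _) h
  have hF : (lin l * Q).IsHomogeneous 3 := (lin_hom l).mul hQ
  have za : ∀ r, eval (u i r) (lin l * Q) = 0 := fun r => by simp [hc.on r]
  have zb : ∀ r, eval (u j r) (lin l * Q) = 0 := fun r => by simp [hc.onQ j hij r]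
  have zc : ∀ r, eval (u k r) (lin l * Q) = 0 := fun r => by simp [hc.onQ k h1.symm r]
  have h1' := h1.symm
  have h2' := h2.symm
  have key : eval (pasc (u j) m) (lin l * Q) = 0 := by
    refine cayley_bacharach hF (p11 := u k (-3-m)) (p12 := u i 2) (p13 := u j (m+1))
      (p21 := u i 0) (p22 := u k (-2-m)) (p23 := u j (m+2)) (p31 := u j (m+3)) (p32 := u j m)
      (hu.col k i j _ _ _ h1.symm hij.symm h2.symm (by omega))
      (hu.col i k j _ _ _ h1 h2.symm hij.symm (by omega))
      (by rw [det_swap, hd, neg_zero])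
      (hu.col k i j _ _ _ h1.symm hij.symm h2.symm (by omega))
      (hu.col i k j _ _ _ h1 h2.symm hij.symm (by omega))
      hd'
      (hu.indep _ _ _ _ h1.symm) (hu.indep _ _ _ _ h2.symm) (hu.indep _ _ _ _ hij.symm)
      (hu.indep _ _ _ _ h1) (hu.indep _ _ _ _ hij.symm) (hu.indep _ _ _ _ h2.symm)
      (hu.indep' _ _ _ (by omega) (by rw [abs_lt]; omega))
      (dcyc (dcyc (hu.mix i k _ _ _ h1 (by omega) (by rw [abs_lt]; omega))))
      (dcyc (hu.mix k i _ _ _ h1.symm (by omega) (by rw [abs_lt]; omega)))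
      (hu.ncol k i j _ _ _ h1.symm hij.symm h2.symm (by omega) (by rw [abs_lt]; omega))
      (hu.ncol k i j _ _ _ h1.symm hij.symm h2.symm (by omega) (by rw [abs_lt]; omega))
      (hu.ncol k i j _ _ _ h1.symm hij.symm h2.symm (by omega) (by rw [abs_lt]; omega))
      (hu.ncol i k j _ _ _ h1 h2.symm hij.symm (by omega) (by rw [abs_lt]; omega))
      (hu.ncol i k j _ _ _ h1 h2.symm hij.symm (by omega) (by rw [abs_lt]; omega))
      (zc _) (za _) (zb _) (za _) (zc _) (zb _) (zb _) (zb _)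
  rw [map_mul, eval_lin] at key
  exact (mul_eq_zero.1 key).resolve_right hQX

lemma pasc_indep {u : Fin 3 → ℤ → Vec} (hu : Prog u) {l : Vec}
    {Q : MvPolynomial (Fin 3) ℂ} (hQ : Q.IsHomogeneous 2) (hi : Irreducible Q)
    {i j : Fin 3} (hc : ConicData u l Q i) (hij : j ≠ i) :
    crs (pasc (u j) 0) (pasc (u j) 1) ≠ 0 := by
  intro h
  have hX := (pascal hu hQ hi hc hij 0).1
  have hY := (pascal hu hQ hi hc hij 1).1
  obtain ⟨c, hcY⟩ := prop_of_crs hX h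
  have hc0 : c ≠ 0 := by rintro rfl; rw [zero_smul] at hcY; exact hY hcY
  have g : ∀ {r s t : ℤ}, r ≠ s → |r - s| < 10 → r ≠ t → |r - t| < 10 → s ≠ t → |s - t| < 10 →
    det3 (u j r) (u j s) (u j t) ≠ 0 := fun h1 h2 h3 h4 h5 h6 => hc.gen hu hQ hi hij h1 h2 h3 h4 h5 h6
  have e1 : dt (crs (u j 1) (u j 2)) (pasc (u j) 0) = 0 := by
    have := dt_crs_right (crs (u j 0) (u j (0+3))) (crs (u j (0+1)) (u j (0+2)))
    rw [dt_comm] at this; exact this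
  have e2 : dt (crs (u j 2) (u j 3)) (pasc (u j) 0) = 0 := by
    have := dt_crs_right (crs (u j 1) (u j (1+3))) (crs (u j (1+1)) (u j (1+2)))
    rw [dt_comm] at this
    change dt (crs (u j 2) (u j 3)) (pasc (u j) 1) = 0 at this
    rw [hcY, dt_smul] at this
    exact (mul_eq_zero.1 this).resolve_left hc0
  have e3 : dt (crs (u j 0) (u j 3)) (pasc (u j) 0) = 0 := by
    have := dt_crs_left (crs (u j 0) (u j (0+3))) (crs (u j (0+1)) (u j (0+2)))
    rw [dt_comm] at this; exact this
  have hcc : crs (crs (u j 1) (u j 2)) (crs (u j 2) (u j 3)) = det3 (u j 2) (u j 3) (u j 1) • u j 2 := by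
    rw [crs_crs]
    have : dt (crs (u j 2) (u j 3)) (u j 2) = 0 := dt_crs_left _ _
    rw [this]; simp [det3]
  have hne : crs (crs (u j 1) (u j 2)) (crs (u j 2) (u j 3)) ≠ 0 := by
    rw [hcc]
    exact smul_ne_zero (g (by norm_num) (by norm_num) (by norm_num) (by norm_num) (by norm_num) (by norm_num))
      (crs_ne_left (hu.indep' j 2 3 (by norm_num) (by norm_num)))
  obtain ⟨d, hd⟩ := form_of_two hne (by rw [dt_comm]; exact e1) (by rw [dt_comm]; exact e2)
  rw [hcc, smul_smul] at hd
  rw [hd, dt_smul] at e3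
  have := g (r := 0) (s := 3) (t := 2) (by norm_num) (by norm_num) (by norm_num) (by norm_num) (by norm_num) (by norm_num)
  rw [(mul_eq_zero.1 e3).resolve_right this, zero_smul] at hd
  exact hX hd

lemma conic_step {H : Type} [AddCommGroup H] [Finite H] {P : Fin 3 → H → Vec} (hP : Net P) {h : H}
    (ho : 10 ≤ addOrderOf h) {b : Fin 3 → H} (hb : b 0 + b 1 + b 2 = 0) {l : Vec} (hl : l ≠ 0)
    {Q : MvPolynomial (Fin 3) ℂ} (hQ : Q.IsHomogeneous 2) (hi : Irreducible Q)
    {i j k : Fin 3} (hij : i ≠ j) (hjk : j ≠ k) (hik : i ≠ k)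
    (hc : ConicData (fun i (r : ℤ) => P i (b i + r • h)) l Q i) (x : H) :
    dt l (P i x) = 0 ∧ eval (P k (-x-b j)) Q = 0 := by
  obtain ⟨b', hb', h4, h5, h6⟩ := exists_base hij hjk hik x (b j)
  obtain ⟨F', h0', hF', hz'⟩ := hP.cubic ho hb'
  have hu := hP.prog ho hb
  have hu' := hP.prog ho hb'
  have hd : Q ∣ F' := by
    refine bezout (Or.inl rfl) hQ hi hF' (fun r : Fin 10 => P j (b j + (r.1 : ℤ) • h)) ?_ ?_ ?_
    · intro r s hrs
      refine hu.indep' j r.1 s.1 ?_ ?_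
      · intro h; apply hrs; ext; exact_mod_cast h
      · rw [abs_lt]; omega
    · intro r; exact hc.onQ j hij.symm _
    · intro r; rw [← h5]; exact hz' j _
  obtain ⟨K, hK⟩ := hd
  obtain ⟨c, hc1, hKh⟩ := hom_quot hF' h0' hK hQ
  have : c = 1 := by omega
  subst this
  obtain ⟨l', rfl⟩ := hom_one_eq_lin hKh
  have hl' : l' ≠ 0 := ne_of_lin (by intro h; rw [h, mul_zero] at hK; exact h0' hK)
  obtain ⟨i', hc'⟩ := conic_class hu' hl' hQ hi (fun i r => by
    have := hz' i r
    rw [hK, map_mul, eval_lin] at this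
    exact (mul_eq_zero.1 this).symm)
  have same : (fun r : ℤ => P j (b j + r • h)) = (fun r : ℤ => P j (b' j + r • h)) := by rw [h5]
  have hi'j : j ≠ i' := by
    rintro rfl
    have h7 := hc'.offQ 0
    have h8 := hc.onQ j hij.symm 0
    simp only [h5] at h7
    exact h7 h8
  have hX := (pascal hu hQ hi hc hij.symm 0).2
  have hY := (pascal hu hQ hi hc hij.symm 1).2
  have hX' := (pascal hu' hQ hi hc' hi'j 0).2
  have hY' := (pascal hu' hQ hi hc' hi'j 1).2
  have hne := pasc_indep hu hQ hi hc hij.symm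
  simp only [← same] at hX' hY'
  obtain ⟨c1, e1⟩ := form_of_two hne hX hY
  obtain ⟨c2, e2⟩ := form_of_two hne hX' hY'
  have hc1 : c1 ≠ 0 := by rintro rfl; rw [zero_smul] at e1; exact hl e1
  have hc2 : c2 ≠ 0 := by rintro rfl; rw [zero_smul] at e2; exact hl' e2
  have tr : ∀ v, dt l' v = 0 → dt l v = 0 := by
    intro v hv
    rw [e2, dt_smul'] at hv
    rw [e1, dt_smul', (mul_eq_zero.1 hv).resolve_left hc2, mul_zero]
  have hi' : i' = i := by
    by_contra hne'
    exact hu.line_two hl (i := i) (j := i') (r := 0) (s := 1) (t := 0) (Ne.symm hne') (by norm_num) (by norm_num)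
      (hc.on 0) (hc.on 1) |> fun hh => by
        have h9 := tr _ (hc'.on 0)
        have h10 := tr _ (hc'.on 1)
        refine hP.mix (i := i') (j := i) (x := b' i' + (0:ℤ) • h) (x' := b' i' + (1:ℤ) • h) (y := b i + (0:ℤ) • h)
          hne' ?_ (det_of_form hl h9 h10 (hc.on 0))
        intro h11
        exact zs_ne ho (m := 1) (by norm_num) (by norm_num) (by simpa using h11)
  subst hi'
  have q1 := tr _ (hc'.on 0)
  have q2 := hc'.onQ k hik.symm 0
  simp only [zero_smul, add_zero, h4, h6] at q1 q2
  exact ⟨q1, q2⟩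

lemma case_conic {H : Type} [AddCommGroup H] [Finite H] {P : Fin 3 → H → Vec} (hP : Net P) {h : H}
    (ho : 10 ≤ addOrderOf h) {b : Fin 3 → H} (hb : b 0 + b 1 + b 2 = 0) {l : Vec} (hl : l ≠ 0)
    {Q : MvPolynomial (Fin 3) ℂ} (hQ : Q.IsHomogeneous 2) (hi : Irreducible Q)
    (hz : ∀ i (r : ℤ), eval (P i (b i + r • h)) (lin l * Q) = 0) (t : Fin 3) (x : H) :
    eval (P t x) (lin l * Q) = 0 := by
  obtain ⟨i, hc⟩ := conic_class (hP.prog ho hb) hl hQ hi (fun i r => by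
    have := hz i r
    rw [map_mul, eval_lin] at this
    exact (mul_eq_zero.1 this))
  rw [map_mul, eval_lin]
  by_cases hti : t = i
  · subst hti
    obtain ⟨j, hij⟩ : ∃ j, t ≠ j := by clear * -; revert t; decide
    obtain ⟨k, h2, h3⟩ := third hij
    rw [(conic_step hP ho hb hl hQ hi hij h2 h3 hc x).1, zero_mul]
  · obtain ⟨j, h2, h3⟩ := third hti
    have := (conic_step hP ho hb hl hQ hi h2 (Ne.symm h3) (Ne.symm hti) hc (-x - b j)).2
    have e : -(-x - b j) - b j = x := by abel
    rw [e] at this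
    rw [this, mul_zero]


/-- three lines carrying a progression -/
structure Tri (u : Fin 3 → ℤ → Vec) (l : Fin 3 → Vec) : Prop where
  on : ∀ i r, dt (l i) (u i r) = 0
  off : ∀ i j, i ≠ j → ∀ r, dt (l i) (u j r) ≠ 0

lemma pig4 (c : Fin 4 → Fin 3) : ∃ a b, a ≠ b ∧ c a = c b := by
  obtain ⟨a, b, h1, h2⟩ := Fintype.exists_ne_map_eq_of_card_lt c (by simp)
  exact ⟨a, b, h1, h2⟩

lemma tri_class {u : Fin 3 → ℤ → Vec} (hu : Prog u) {m : Fin 3 → Vec} (hm : ∀ c, m c ≠ 0)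
    (hz : ∀ i r, ∃ c, dt (m c) (u i r) = 0) : ∃ l, Tri u l := by
  have h1 : ∀ i, ∃ c, ∃ r s : ℤ, r ≠ s ∧ |r - s| < 10 ∧ dt (m c) (u i r) = 0 ∧ dt (m c) (u i s) = 0 := by
    intro i
    choose c hc using hz i
    obtain ⟨a, b, hab, h⟩ := pig4 (fun t => c (t.1 : ℤ))
    refine ⟨c (a.1 : ℤ), a.1, b.1, ?_, ?_, hc _, ?_⟩
    · intro h; apply hab; ext; exact_mod_cast h
    · rw [abs_lt]; omega
    · rw [h]; exact hc _
  choose σ r s h2 h3 h4 h5 using h1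
  have off : ∀ i j, i ≠ j → ∀ t, dt (m (σ i)) (u j t) ≠ 0 := fun i j hij t =>
    hu.line_two (hm _) hij (h2 i) (h3 i) (h4 i) (h5 i)
  have inj : Function.Injective σ := by
    intro i j hij
    by_contra hne
    exact off i j hne (r j) (by rw [hij]; exact h4 j)
  have surj := Finite.surjective_of_injective inj
  refine ⟨fun i => m (σ i), fun i t => ?_, off⟩
  obtain ⟨c, hc⟩ := hz i t
  obtain ⟨j, rfl⟩ := surj c
  by_cases hij : j = i
  · rw [← hij] at hc ⊢; exact hc
  · exact absurd hc (off j i hij t)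

lemma det_mul (p q r a b c : Vec) : det3 p q r * det3 a b c =
    dt p a * (dt q b * dt r c - dt q c * dt r b) - dt q a * (dt p b * dt r c - dt p c * dt r b)
     + dt r a * (dt p b * dt q c - dt p c * dt q b) := by
  simp only [det3, dt, crs0, crs1, crs2]; ring

lemma exists_form {p q : Vec} (h : crs p q ≠ 0) : ∃ t, det3 p q t ≠ 0 := by
  rcases vec_ne h with h | h | h
  · exact ⟨![1,0,0], by simpa [det3, dt] using h⟩
  · exact ⟨![0,1,0], by simpa [det3, dt] using h⟩
  · exact ⟨![0,0,1], by simpa [det3, dt] using h⟩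

lemma cramer (a b c w : Vec) : det3 a b c • w = det3 w b c • a + det3 a w c • b + det3 a b w • c := by
  funext i
  fin_cases i <;> simp [det3, dt, crs] <;> ring

lemma Tri.det_ne {u : Fin 3 → ℤ → Vec} (hu : Prog u) {l : Fin 3 → Vec} (hl : Tri u l)
    {n : ℤ} (hn : n ≠ 0) (hper : ∀ r, u 0 (r + n) = u 0 r) : det3 (l 0) (l 1) (l 2) ≠ 0 := by
  intro hdet
  have n0 : l 0 ≠ 0 := by
    intro h; apply hl.off 0 1 (by decide) 0; rw [h]; simp [dt]
  have hc : crs (l 0) (l 1) ≠ 0 := by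
    intro h
    obtain ⟨c, hc⟩ := prop_of_crs n0 h
    apply hl.off 1 0 (by decide) 0
    rw [hc, dt_smul', hl.on, mul_zero]
  obtain ⟨t, ht⟩ := exists_form hc
  obtain ⟨α, β, h2⟩ := span_of_det hc hdet
  have hc2 : ∀ s, α * dt (l 0) (u 2 s) + β * dt (l 1) (u 2 s) = 0 := by
    intro s
    have := hl.on 2 s
    rw [h2, dt_add', dt_smul', dt_smul'] at this
    exact this
  have a1 : ∀ r, dt (l 1) (u 0 r) ≠ 0 := hl.off 1 0 (by decide)
  have b0 : ∀ r, dt (l 0) (u 1 r) ≠ 0 := hl.off 0 1 (by decide)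
  have c0 : ∀ r, dt (l 0) (u 2 r) ≠ 0 := hl.off 0 2 (by decide)
  have c1 : ∀ r, dt (l 1) (u 2 r) ≠ 0 := hl.off 1 2 (by decide)
  have hβ : β ≠ 0 := by
    rintro rfl
    have h3 : α = 0 := by
      have := hc2 0
      rw [zero_mul, add_zero] at this
      exact (mul_eq_zero.1 this).resolve_right (c0 0)
    apply hl.off 2 0 (by decide) 0
    rw [h2, h3]; simp [dt]
  have hα : α ≠ 0 := by
    rintro rfl
    have := hc2 0
    rw [zero_mul, zero_add] at this
    exact hβ ((mul_eq_zero.1 this).resolve_right (c1 0))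
  let A : ℤ → ℂ := fun r => dt t (u 0 r) / dt (l 1) (u 0 r)
  let B : ℤ → ℂ := fun r => dt t (u 1 r) / dt (l 0) (u 1 r)
  let C : ℤ → ℂ := fun r => dt t (u 2 r) / dt (l 0) (u 2 r)
  have key : ∀ r s, β * C (-r-s) = β * B s - α * A r := by
    intro r s
    have hcol := hu.col 0 1 2 r s (-r-s) (by decide) (by decide) (by decide) (by omega)
    have hm := det_mul (l 0) (l 1) t (u 0 r) (u 1 s) (u 2 (-r-s))
    rw [hcol, hl.on 0, hl.on 1] at hm
    have h3 := hc2 (-r-s)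
    have x1 := a1 r
    have x2 := b0 s
    have x3 := c0 (-r-s)
    simp only [A, B, C]
    field_simp
    linear_combination β * hm + dt t (u 0 r) * dt (l 0) (u 1 s) * h3
  have step : ∀ r, A (r+1) - A r = A 1 - A 0 := by
    intro r
    have k1 := key (r+1) 0
    have k2 := key r 1
    have k3 := key 1 0
    have k4 := key 0 1
    rw [show -(r+1)-0 = -r-1 by ring] at k1
    rw [show -(1:ℤ)-0 = -0-1 by ring] at k3
    apply mul_left_cancel₀ hα
    linear_combination k1 - k2 - k3 + k4
  have lin' : ∀ m : ℕ, A m = A 0 + m * (A 1 - A 0) := by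
    intro m
    induction m with
    | zero => simp
    | succ m ih =>
      have := step m
      push_cast at *
      linear_combination this + ih
  have hA10 : A 1 - A 0 = 0 := by
    have h1 : A (n.natAbs : ℤ) = A 0 := by
      rcases Int.natAbs_eq n with h | h
      · have := hper 0
        rw [zero_add, h] at this
        simp only [A]; rw [this]
      · have := hper (n.natAbs)
        rw [show (n.natAbs : ℤ) + n = 0 by omega] at this
        simp only [A]; rw [this]
    have h2 := lin' n.natAbs
    rw [h1] at h2
    have h3 : ((n.natAbs : ℕ) : ℂ) ≠ 0 := by
      rw [Nat.cast_ne_zero]; omega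
    have : ((n.natAbs : ℕ) : ℂ) * (A 1 - A 0) = 0 := by linear_combination -h2
    exact (mul_eq_zero.1 this).resolve_left h3
  have hv : dt (l 1) (u 0 1) • u 0 0 + (-dt (l 1) (u 0 0)) • u 0 1 = 0 := by
    by_contra hv
    apply ht
    refine det_of_form hv ?_ ?_ ?_
    · rw [dt_comm, dt_add, dt_smul, dt_smul, hl.on, hl.on]; ring
    · rw [dt_comm, dt_add, dt_smul, dt_smul]; ring
    · rw [dt_comm, dt_add, dt_smul, dt_smul]
      simp only [A] at hA10
      have x1 := a1 0
      have x2 := a1 1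
      field_simp at hA10
      linear_combination -hA10
  have hne := hu.indep' 0 0 1 (by norm_num) (by norm_num)
  apply hne
  have h5 := congrArg (crs (u 0 0)) hv
  rw [crs_add_right, crs_smul_right, crs_smul_right, crs_self] at h5
  have h6 : crs (u 0 0) 0 = 0 := by funext i; fin_cases i <;> simp [crs]
  rw [h6, smul_zero, zero_add] at h5
  exact (smul_eq_zero.1 h5).resolve_left (neg_ne_zero.2 (a1 0))

/-- triangle with multiplier -/
structure TriZ (u : Fin 3 → ℤ → Vec) (l : Fin 3 → Vec) (z : ℂ) : Prop extends Tri u l where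
  det : det3 (l 0) (l 1) (l 2) ≠ 0
  z0 : z ≠ 0
  z2 : z ^ 2 ≠ 1
  ratio : ∀ i j k : Fin 3, j = i + 1 → k = i + 2 → ∀ r,
    dt (l j) (u i (r+1)) * dt (l k) (u i r) = z * dt (l j) (u i r) * dt (l k) (u i (r+1))

lemma Tri.toZ {u : Fin 3 → ℤ → Vec} (hu : Prog u) {l : Fin 3 → Vec} (hl : Tri u l)
    {n : ℤ} (hn : n ≠ 0) (hper : ∀ r, u 0 (r + n) = u 0 r) : ∃ z, TriZ u l z := by
  have hdet := hl.det_ne hu hn hper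
  have a1 : ∀ r, dt (l 1) (u 0 r) ≠ 0 := hl.off 1 0 (by decide)
  have a2 : ∀ r, dt (l 2) (u 0 r) ≠ 0 := hl.off 2 0 (by decide)
  have b0 : ∀ r, dt (l 0) (u 1 r) ≠ 0 := hl.off 0 1 (by decide)
  have b2 : ∀ r, dt (l 2) (u 1 r) ≠ 0 := hl.off 2 1 (by decide)
  have c0 : ∀ r, dt (l 0) (u 2 r) ≠ 0 := hl.off 0 2 (by decide)
  have c1 : ∀ r, dt (l 1) (u 2 r) ≠ 0 := hl.off 1 2 (by decide)
  let f : ℤ → ℂ := fun r => dt (l 1) (u 0 r) / dt (l 2) (u 0 r)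
  let g : ℤ → ℂ := fun r => dt (l 2) (u 1 r) / dt (l 0) (u 1 r)
  let e : ℤ → ℂ := fun r => dt (l 0) (u 2 r) / dt (l 1) (u 2 r)
  have f0 : ∀ r, f r ≠ 0 := fun r => div_ne_zero (a1 r) (a2 r)
  have g0 : ∀ r, g r ≠ 0 := fun r => div_ne_zero (b2 r) (b0 r)
  have e0 : ∀ r, e r ≠ 0 := fun r => div_ne_zero (c0 r) (c1 r)
  have iff : ∀ r s t, f r * g s * e t = -1 ↔ det3 (u 0 r) (u 1 s) (u 2 t) = 0 := by
    intro r s t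
    have hm := det_mul (l 0) (l 1) (l 2) (u 0 r) (u 1 s) (u 2 t)
    rw [hl.on 0, hl.on 1, hl.on 2] at hm
    have x1 := a1 r
    have x2 := a2 r
    have x3 := b0 s
    have x4 := b2 s
    have x5 := c0 t
    have x6 := c1 t
    simp only [f, g, e]
    constructor
    · intro h
      field_simp at h
      apply (mul_eq_zero.1 (_ : det3 (l 0) (l 1) (l 2) * _ = 0)).resolve_left hdet
      linear_combination hm + h
    · intro h
      rw [h] at hm
      field_simp
      linear_combination -hm
  have one : ∀ r s t, r + s + t = 0 → f r * g s * e t = -1 := fun r s t h =>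
    (iff r s t).2 (hu.col 0 1 2 r s t (by decide) (by decide) (by decide) h)
  have fg : ∀ r s, f (r+1) * g s = f r * g (s+1) := by
    intro r s
    apply mul_right_cancel₀ (e0 (-r-s-1))
    rw [one _ _ _ (by ring), one _ _ _ (by ring)]
  have fe : ∀ r s, f (r+1) * e s = f r * e (s+1) := by
    intro r s
    apply mul_right_cancel₀ (g0 (-r-s-1))
    linear_combination one (r+1) (-r-s-1) s (by ring) - one r (-r-s-1) (s+1) (by ring)
  let z := f 1 / f 0
  have gz : ∀ s, g (s+1) = z * g s := by
    intro s
    have := fg 0 s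
    rw [zero_add] at this
    simp only [z]; field_simp [f0 0]; linear_combination -this
  have ez : ∀ s, e (s+1) = z * e s := by
    intro s
    have := fe 0 s
    rw [zero_add] at this
    simp only [z]; field_simp [f0 0]; linear_combination -this
  have fz : ∀ s, f (s+1) = z * f s := by
    intro s
    apply mul_right_cancel₀ (g0 0)
    rw [fg s 0, gz]; ring
  refine ⟨z, hl, hdet, div_ne_zero (f0 1) (f0 0), ?_, ?_⟩
  · intro h
    have h2 : f 2 = f 0 := by
      have q1 := fz 1
      have q2 := fz 0
      rw [show (1:ℤ)+1 = 2 by norm_num] at q1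
      rw [zero_add] at q2
      rw [q1, q2]; linear_combination f 0 * h
    have := one 0 0 0 (by ring)
    rw [← h2, iff] at this
    exact hu.ncol 0 1 2 2 0 0 (by decide) (by decide) (by decide) (by norm_num) (by norm_num) this
  · intro i j k hj hk r
    subst hj hk
    fin_cases i
    · have := fz r
      have x1 := a2 r
      have x2 := a2 (r+1)
      simp only [f] at this
      rw [← mul_div_assoc, div_eq_div_iff x2 x1] at this
      exact this
    · have := gz r
      have x1 := b0 r
      have x2 := b0 (r+1)
      simp only [g] at this
      rw [← mul_div_assoc, div_eq_div_iff x2 x1] at this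
      exact this
    · have := ez r
      have x1 := c1 r
      have x2 := c1 (r+1)
      simp only [e] at this
      rw [← mul_div_assoc, div_eq_div_iff x2 x1] at this
      exact this

lemma mobius {x y : ℤ → ℂ} {z z' A B C D : ℂ} (hx : ∀ r, x (r+1) = z * x r) (hy : ∀ r, y (r+1) = z' * y r)
    (x0 : ∀ r, x r ≠ 0) (y0 : ∀ r, y r ≠ 0) (h : ∀ r, y r * (C * x r + D) = A * x r + B) (hz : z ^ 2 ≠ 1)
    (hd : A * D - B * C ≠ 0) (z0 : z ≠ 0) : (B = 0 ∧ C = 0 ∧ z' = z) ∨ (A = 0 ∧ D = 0 ∧ z * z' = 1) := by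
  have hz1 : z ≠ 1 := by rintro rfl; simp at hz
  have key : ∀ r, A * C * (z * x r) ^ 2 = B * D := by
    intro r
    have h0 := h r
    have h1 := h (r+1)
    have h2 := h (r+1+1)
    rw [hx, hy] at h1
    rw [hx (r+1), hy (r+1), hx, hy] at h2
    have e : (A * x r + B) * (A * (z * (z * x r)) + B) * (C * (z * x r) + D)^2
      = (A * (z * x r) + B)^2 * (C * x r + D) * (C * (z * (z * x r)) + D) := by
      rw [← h0, ← h1, ← h2]; ring
    have e2 : (z-1)^2 * x r * (A * D - B * C) * (A * C * (z * x r) ^ 2 - B * D) = 0 := by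
      linear_combination -e
    have := (mul_eq_zero.1 e2).resolve_left
      (mul_ne_zero (mul_ne_zero (pow_ne_zero _ (sub_ne_zero.2 hz1)) (x0 r)) hd)
    exact sub_eq_zero.1 this
  have hAC : A * C = 0 := by
    have k0 := key 0
    have k1 := key (0+1)
    rw [hx] at k1
    have : A * C * ((z * x 0)^2 * (z^2 - 1)) = 0 := by linear_combination k1 - k0
    exact (mul_eq_zero.1 this).resolve_right
      (mul_ne_zero (pow_ne_zero _ (mul_ne_zero z0 (x0 0))) (sub_ne_zero.2 hz))
  have hBD : B * D = 0 := by rw [← key 0, hAC, zero_mul]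
  have h0 := h 0
  have h1 := h (0+1)
  rw [hx, hy] at h1
  have xx := x0 0
  have yy := y0 0
  rcases mul_eq_zero.1 hAC with hA | hC
  · right
    have hB : B ≠ 0 := by rintro rfl; apply hd; rw [hA]; ring
    have hC : C ≠ 0 := by rintro rfl; apply hd; rw [hA]; ring
    have hD := (mul_eq_zero.1 hBD).resolve_left hB
    refine ⟨hA, hD, ?_⟩
    rw [hA, hD] at h0 h1
    have : (y 0 * C * x 0) * (z * z' - 1) = 0 := by linear_combination h1 - h0
    exact sub_eq_zero.1 ((mul_eq_zero.1 this).resolve_left (mul_ne_zero (mul_ne_zero yy hC) xx))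
  · left
    have hA : A ≠ 0 := by rintro rfl; apply hd; rw [hC]; ring
    have hD : D ≠ 0 := by rintro rfl; apply hd; rw [hC]; ring
    have hB := (mul_eq_zero.1 hBD).resolve_right hD
    refine ⟨hB, hC, ?_⟩
    rw [hB, hC] at h0 h1
    have : (y 0 * D) * (z' - z) = 0 := by linear_combination h1 - z * h0
    exact sub_eq_zero.1 ((mul_eq_zero.1 this).resolve_left (mul_ne_zero yy hD))

lemma cyc_facts {i j k : Fin 3} (hj : j = i + 1) (hk : k = i + 2) :
    i ≠ j ∧ j ≠ k ∧ i ≠ k ∧ k = j + 1 ∧ i = j + 2 ∧ i = k + 1 ∧ j = k + 2 := by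
  subst hj hk; revert i; decide

lemma det_cyc_ne {l : Fin 3 → Vec} (h : det3 (l 0) (l 1) (l 2) ≠ 0) {i j k : Fin 3} (hj : j = i + 1) (hk : k = i + 2) :
    det3 (l i) (l j) (l k) ≠ 0 := by
  subst hj hk
  fin_cases i
  · exact h
  · exact dcyc h
  · exact dcyc (dcyc h)

lemma expand {a b c : Vec} (h : det3 a b c ≠ 0) (w : Vec) : ∃ x y z : ℂ, w = x • a + y • b + z • c := by
  refine ⟨det3 w b c / det3 a b c, det3 a w c / det3 a b c, det3 a b w / det3 a b c, ?_⟩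
  have := cramer a b c w
  have h2 : w = (det3 a b c)⁻¹ • (det3 a b c • w) := by rw [smul_smul, inv_mul_cancel₀ h, one_smul]
  rw [this] at h2
  calc w = _ := h2
    _ = _ := by module

lemma compare {u u' : Fin 3 → ℤ → Vec} (hu : Prog u) {l l' : Fin 3 → Vec} {z z' : ℂ}
    (hl : TriZ u l z) (hl' : TriZ u' l' z') {i j k : Fin 3} (hj : j = i + 1) (hk : k = i + 2)
    (hs : ∀ r, u' i r = u i r) :
    (∃ c : ℂ, c ≠ 0 ∧ l' i = c • l i) ∧
    ((z' = z ∧ det3 (l i) (l j) (l' j) = 0 ∧ det3 (l i) (l k) (l' k) = 0) ∨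
     (z * z' = 1 ∧ det3 (l i) (l k) (l' j) = 0 ∧ det3 (l i) (l j) (l' k) = 0)) := by
  obtain ⟨hij, hjk, hik, -⟩ := cyc_facts hj hk
  have hD := det_cyc_ne hl.det hj hk
  have hD' := det_cyc_ne hl'.det hj hk
  have prop : ∃ c : ℂ, c ≠ 0 ∧ l' i = c • l i := by
    have hne := hu.indep' i 0 1 (by norm_num) (by norm_num)
    obtain ⟨c1, e1⟩ := form_of_two hne (hl.on i 0) (hl.on i 1)
    obtain ⟨c2, e2⟩ := form_of_two hne (by rw [← hs]; exact hl'.on i 0) (by rw [← hs]; exact hl'.on i 1)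
    have h1 : c1 ≠ 0 := by
      rintro rfl; apply hD; rw [e1]; simp [det3, dt, crs]
    have h2 : c2 ≠ 0 := by
      rintro rfl; apply hD'; rw [e2]; simp [det3, dt, crs]
    refine ⟨c2 / c1, div_ne_zero h2 h1, ?_⟩
    rw [e1, e2, smul_smul, div_mul_cancel₀ _ h1]
  refine ⟨prop, ?_⟩
  obtain ⟨c, hc0, hc⟩ := prop
  obtain ⟨E, A, B, hp⟩ := expand hD (l' j)
  obtain ⟨G, C, D, hq⟩ := expand hD (l' k)
  have hdet : A * D - B * C ≠ 0 := by
    intro h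
    apply hD'
    have : det3 (l' i) (l' j) (l' k) = c * (A * D - B * C) * det3 (l i) (l j) (l k) := by
      rw [hc, hp, hq]
      simp only [det3, dt, crs0, crs1, crs2, Pi.add_apply, Pi.smul_apply, smul_eq_mul]; ring
    rw [this, h]; ring
  have p0 : ∀ r, dt (l j) (u i r) ≠ 0 := hl.off j i hij.symm
  have q0 : ∀ r, dt (l k) (u i r) ≠ 0 := hl.off k i hik.symm
  have p0' : ∀ r, dt (l' j) (u i r) ≠ 0 := fun r => by rw [← hs]; exact hl'.off j i hij.symm r
  have q0' : ∀ r, dt (l' k) (u i r) ≠ 0 := fun r => by rw [← hs]; exact hl'.off k i hik.symm r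
  have hpv : ∀ r, dt (l' j) (u i r) = A * dt (l j) (u i r) + B * dt (l k) (u i r) := by
    intro r
    rw [hp, dt_add', dt_add', dt_smul', dt_smul', dt_smul', hl.on]; ring
  have hqv : ∀ r, dt (l' k) (u i r) = C * dt (l j) (u i r) + D * dt (l k) (u i r) := by
    intro r
    rw [hq, dt_add', dt_add', dt_smul', dt_smul', dt_smul', hl.on]; ring
  have hm := mobius (x := fun r => dt (l j) (u i r) / dt (l k) (u i r))
    (y := fun r => dt (l' j) (u i r) / dt (l' k) (u i r)) (z := z) (z' := z') (A := A) (B := B) (C := C) (D := D)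
    (fun r => by
      have := hl.ratio i j k hj hk r
      rw [← mul_div_assoc, div_eq_div_iff (q0 _) (q0 _)]; exact this)
    (fun r => by
      have := hl'.ratio i j k hj hk r
      rw [hs, hs] at this
      rw [← mul_div_assoc, div_eq_div_iff (q0' _) (q0' _)]; exact this)
    (fun r => div_ne_zero (p0 r) (q0 r)) (fun r => div_ne_zero (p0' r) (q0' r))
    (fun r => by
      have x1 := q0 r
      have x2 := q0' r
      field_simp
      linear_combination (-(dt (l' j) (u i r))) * hqv r + dt (l' k) (u i r) * hpv r)
    hl.z2 hdet hl.z0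
  rcases hm with ⟨hB, hC, hz⟩ | ⟨hA, hD0, hz⟩
  · left
    refine ⟨hz, ?_, ?_⟩
    · rw [hp, hB]
      simp only [det3, dt, crs0, crs1, crs2, Pi.add_apply, Pi.smul_apply, smul_eq_mul]; ring
    · rw [hq, hC]
      simp only [det3, dt, crs0, crs1, crs2, Pi.add_apply, Pi.smul_apply, smul_eq_mul]; ring
  · right
    refine ⟨hz, ?_, ?_⟩
    · rw [hp, hA]
      simp only [det3, dt, crs0, crs1, crs2, Pi.add_apply, Pi.smul_apply, smul_eq_mul]; ring
    · rw [hq, hD0]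
      simp only [det3, dt, crs0, crs1, crs2, Pi.add_apply, Pi.smul_apply, smul_eq_mul]; ring


lemma tri_step {H : Type} [AddCommGroup H] {P : Fin 3 → H → Vec} (hP : Net P) {h : H}
    (ho : 10 ≤ addOrderOf h)
    (hall : ∀ b : Fin 3 → H, b 0 + b 1 + b 2 = 0 → ∃ l z, TriZ (fun i (r : ℤ) => P i (b i + r • h)) l z)
    {b : Fin 3 → H} (hb : b 0 + b 1 + b 2 = 0) {l : Fin 3 → Vec} {z : ℂ}
    (hl : TriZ (fun i (r : ℤ) => P i (b i + r • h)) l z) (i : Fin 3) (x : H) : dt (l i) (P i x) = 0 := by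
  obtain ⟨j, hj⟩ : ∃ j, j = i + 1 := ⟨_, rfl⟩
  obtain ⟨k, hk⟩ : ∃ k, k = i + 2 := ⟨_, rfl⟩
  obtain ⟨hij, hjk, hik, kj, ij, ik, jk⟩ := cyc_facts hj hk
  obtain ⟨b1, hb1, x1, x2, -⟩ := exists_base hik hjk.symm hij x (b k)
  obtain ⟨b2, hb2, y1, y2, -⟩ := exists_base hij hjk hik x (b j)
  obtain ⟨m, z1, hm⟩ := hall b1 hb1
  obtain ⟨n, z2, hn⟩ := hall b2 hb2
  have hu := hP.prog ho hb
  have hu1 := hP.prog ho hb1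
  obtain ⟨⟨c1, hc1, e1⟩, C1⟩ := compare hu hl hm ik jk (fun r => by simp only [x2])
  obtain ⟨⟨c2, hc2, e2⟩, C2⟩ := compare hu hl hn kj ij (fun r => by simp only [y2])
  obtain ⟨⟨c3, hc3, e3⟩, C3⟩ := compare hu1 hm hn hj hk (fun r => by simp only [x1, y1])
  have hD := det_cyc_ne hl.det hj hk
  have hDm := det_cyc_ne hm.det hj hk
  obtain ⟨α, β, γ, hL⟩ := expand hD (m i)
  have d1 : det3 (l k) (l i) (m i) = β * det3 (l i) (l j) (l k) := by
    rw [hL]; simp only [det3, dt, crs0, crs1, crs2, Pi.add_apply, Pi.smul_apply, smul_eq_mul]; ring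
  have d2 : det3 (l j) (l i) (m i) = -γ * det3 (l i) (l j) (l k) := by
    rw [hL]; simp only [det3, dt, crs0, crs1, crs2, Pi.add_apply, Pi.smul_apply, smul_eq_mul]; ring
  have d3 : det3 (l j) (l k) (m i) = α * det3 (l i) (l j) (l k) := by
    rw [hL]; simp only [det3, dt, crs0, crs1, crs2, Pi.add_apply, Pi.smul_apply, smul_eq_mul]; ring
  have d3' : det3 (l k) (l j) (m i) = -α * det3 (l i) (l j) (l k) := by
    rw [hL]; simp only [det3, dt, crs0, crs1, crs2, Pi.add_apply, Pi.smul_apply, smul_eq_mul]; ring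
  have dn : ∀ p q, det3 p q (n i) = 0 → det3 p q (m i) = 0 := by
    intro p q h
    rw [e3, det3, dt_smul] at h
    exact (mul_eq_zero.1 h).resolve_left hc3
  have hmx : dt (m i) (P i x) = 0 := by
    have := hm.on i 0
    simpa [x1] using this
  have hmk : dt (m i) (P k (b k)) ≠ 0 := by
    have := hm.off i k hik 0
    simpa [x2] using this
  have hmj : dt (m i) (P j (b j)) ≠ 0 := by
    have := hn.off i j hij 0
    simp only [y2, zero_smul, add_zero, e3, dt_smul'] at this
    exact right_ne_zero_of_mul this
  have hlk : dt (l k) (P k (b k)) = 0 := by simpa using hl.on k 0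
  have hlj : dt (l j) (P j (b j)) = 0 := by simpa using hl.on j 0
  have zero : ∀ {t : ℂ}, t * det3 (l i) (l j) (l k) = 0 → t = 0 := fun h =>
    (mul_eq_zero.1 h).resolve_right hD
  have nzj : ¬ (α = 0 ∧ γ = 0) := by
    rintro ⟨rfl, rfl⟩
    apply hmj; rw [hL, dt_add', dt_add', dt_smul', dt_smul', dt_smul', hlj]; ring
  have nzk : ¬ (α = 0 ∧ β = 0) := by
    rintro ⟨rfl, rfl⟩
    apply hmk; rw [hL, dt_add', dt_add', dt_smul', dt_smul', dt_smul', hlk]; ring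
  rcases C1 with ⟨_, f1, _⟩ | ⟨w1, f1, _⟩ <;> rcases C2 with ⟨_, _, g1⟩ | ⟨w2, _, g1⟩
  · have hβ := zero (d1.symm.trans f1)
    have hγ := neg_eq_zero.1 (zero (d2.symm.trans (dn _ _ g1)))
    have hα : α ≠ 0 := by
      rintro rfl; exact nzj ⟨rfl, hγ⟩
    rw [hL, hβ, hγ, dt_add', dt_add', dt_smul', dt_smul', dt_smul'] at hmx
    have : α * dt (l i) (P i x) = 0 := by linear_combination hmx
    exact (mul_eq_zero.1 this).resolve_left hα
  · exact absurd ⟨zero (d3.symm.trans (dn _ _ g1)), zero (d1.symm.trans f1)⟩ nzk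
  · exact absurd ⟨neg_eq_zero.1 (zero (d3'.symm.trans f1)), neg_eq_zero.1 (zero (d2.symm.trans (dn _ _ g1)))⟩ nzj
  · exfalso
    have hα := neg_eq_zero.1 (zero (d3'.symm.trans f1))
    have hγ : γ ≠ 0 := fun h => nzj ⟨hα, h⟩
    rcases C3 with ⟨_, k1, _⟩ | ⟨w3, _, _⟩
    · rw [e2, det3, dt_smul] at k1
      have k2 : det3 (m i) (m j) (l j) = 0 := (mul_eq_zero.1 k1).resolve_left hc2
      have k3 : γ * det3 (l k) (m j) (l j) = 0 := by
        rw [hL, hα] at k2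
        rw [← k2]
        simp only [det3, dt, crs0, crs1, crs2, Pi.add_apply, Pi.smul_apply, smul_eq_mul]; ring
      have k4 := (mul_eq_zero.1 k3).resolve_left hγ
      apply hDm
      rw [e1, hL, hα]
      have : det3 ((0:ℂ) • l i + β • l j + γ • l k) (m j) (c1 • l k) = - β * c1 * det3 (l k) (m j) (l j) := by
        simp only [det3, dt, crs0, crs1, crs2, Pi.add_apply, Pi.smul_apply, smul_eq_mul]; ring
      rw [this, k4, mul_zero]
    · have hz0 := hl.z0
      apply hl.z2
      linear_combination z^2 * (-w3) + w1 * z * z2 + w2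

lemma case_tri {H : Type} [AddCommGroup H] {P : Fin 3 → H → Vec} (hP : Net P) {h : H}
    (ho : 10 ≤ addOrderOf h)
    (hall : ∀ b : Fin 3 → H, b 0 + b 1 + b 2 = 0 → ∃ l z, TriZ (fun i (r : ℤ) => P i (b i + r • h)) l z) :
    ∃ F : MvPolynomial (Fin 3) ℂ, F ≠ 0 ∧ F.IsHomogeneous 3 ∧ ∀ i x, eval (P i x) F = 0 := by
  obtain ⟨l, z, hl⟩ := hall 0 (by simp)
  have key := tri_step hP ho hall (b := 0) (by simp) hl
  have ne : ∀ i, l i ≠ 0 := by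
    intro i h0
    obtain ⟨j, hij⟩ : ∃ j, i ≠ j := by clear * -; revert i; decide
    apply hl.off i j hij 0; rw [h0]; simp [dt]
  refine ⟨lin (l 0) * lin (l 1) * lin (l 2), ?_, ?_, ?_⟩
  · exact mul_ne_zero (mul_ne_zero (lin_ne (ne 0)) (lin_ne (ne 1))) (lin_ne (ne 2))
  · exact ((lin_hom _).mul (lin_hom _)).mul (lin_hom _)
  · intro i x
    have := key i x
    fin_cases i <;> simp at this ⊢ <;> simp [this]

lemma net_cubic {H : Type} [AddCommGroup H] [Finite H] {P : Fin 3 → H → Vec} (hP : Net P) {h : H}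
    (ho : 10 ≤ addOrderOf h) :
    ∃ F : MvPolynomial (Fin 3) ℂ, F ≠ 0 ∧ F.IsHomogeneous 3 ∧ ∀ i x, eval (P i x) F = 0 := by
  by_cases h1 : ∃ b : Fin 3 → H, b 0 + b 1 + b 2 = 0 ∧ ∃ F : MvPolynomial (Fin 3) ℂ, F.IsHomogeneous 3 ∧ Irreducible F ∧
      ∀ i (r : ℤ), eval (P i (b i + r • h)) F = 0
  · obtain ⟨b, hb, F, hF, hi, hz⟩ := h1
    exact ⟨F, hi.ne_zero, hF, case_irred hP ho hb hF hi hz⟩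
  by_cases h2 : ∃ b : Fin 3 → H, b 0 + b 1 + b 2 = 0 ∧ ∃ (l : Vec) (Q : MvPolynomial (Fin 3) ℂ), l ≠ 0 ∧ Q.IsHomogeneous 2 ∧ Irreducible Q ∧
      ∀ i (r : ℤ), eval (P i (b i + r • h)) (lin l * Q) = 0
  · obtain ⟨b, hb, l, Q, hl, hQ, hi, hz⟩ := h2
    exact ⟨lin l * Q, mul_ne_zero (lin_ne hl) hi.ne_zero, (lin_hom l).mul hQ, case_conic hP ho hb hl hQ hi hz⟩
  apply case_tri hP ho
  intro b hb
  obtain ⟨F, h0, hF, hz⟩ := hP.cubic ho hb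
  rcases cubic_cases hF h0 with hi | ⟨n, Q, hn, hQ0, hQ, rfl⟩
  · exact absurd ⟨b, hb, F, hF, hi, hz⟩ h1
  rcases quad_cases hQ hQ0 with hi | ⟨m, m', hm, hm', rfl⟩
  · exact absurd ⟨b, hb, n, Q, hn, hQ, hi, hz⟩ h2
  obtain ⟨l, hl⟩ := tri_class (hP.prog ho hb) (m := ![n, m, m']) (by
      intro c; fin_cases c
      · exact hn
      · exact hm
      · exact hm') (by
      intro i r
      have := hz i r
      rw [map_mul, map_mul, eval_lin, eval_lin, eval_lin] at this
      rcases mul_eq_zero.1 this with h | h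
      · exact ⟨0, h⟩
      rcases mul_eq_zero.1 h with h | h
      · exact ⟨1, h⟩
      · exact ⟨2, h⟩)
  obtain ⟨z, hz⟩ := hl.toZ (hP.prog ho hb) (n := addOrderOf h) (by omega) (by
    intro r
    simp only [add_smul, natCast_zsmul, addOrderOf_nsmul_eq_zero, add_zero])
  exact ⟨l, z, hz⟩

lemma net_smooth {H : Type} [AddCommGroup H] {P : Fin 3 → H → Vec} (hP : Net P) {h : H}
    (ho : 10 ≤ addOrderOf h) {F : MvPolynomial (Fin 3) ℂ} (h0 : F ≠ 0) (hF : F.IsHomogeneous 3)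
    (hz : ∀ i x, eval (P i x) F = 0) (i : Fin 3) (x : H) : ∃ j, eval (P i x) (pderiv j F) ≠ 0 := by
  by_contra hs
  push Not at hs
  obtain ⟨j, hij⟩ : ∃ j, i ≠ j := by clear * -; revert i; decide
  obtain ⟨k, hjk, hik⟩ := third hij
  let y : Fin 4 → H := fun r => (r.1 : ℤ) • h
  have hy : ∀ r s, r ≠ s → y r ≠ y s := by
    intro r s hrs he
    have : ((r.1 : ℤ) - s.1) • h = 0 := by rw [sub_smul, sub_eq_zero]; exact he
    refine zs_ne ho ?_ ?_ this
    · intro h; apply hrs; ext; omega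
    · rw [abs_lt]; omega
  let n : Fin 4 → Vec := fun r => crs (P i x) (P j (y r))
  have hn : ∀ r, n r ≠ 0 := fun r => hP.indep _ _ _ _ (Or.inl hij)
  have hd : ∀ r, lin (n r) ∣ F := by
    intro r
    refine lin_dvd (hn r) (fun w hw => ?_)
    exact vanish_sing hF (hP.indep _ _ _ _ (Or.inl hij)) (hP.indep _ _ _ _ (Or.inl hik)) (hP.indep _ _ _ _ (Or.inl hjk))
      ((hP.col i j k x (y r) (-x-y r) hij hjk hik).2 (by abel)) (hz _ _) (hz _ _) (hz _ _) hs w hw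
  have hrel : ∀ r s, r ≠ s → IsRelPrime (lin (n r)) (lin (n s)) := by
    intro r s hrs
    rw [(lin_irred (hn r)).isRelPrime_iff_not_dvd]
    rintro ⟨K, hK⟩
    have := congrArg (eval (P j (y r))) hK
    rw [map_mul, eval_lin, eval_lin, dt_crs_right, zero_mul] at this
    exact hP.mix hij.symm (hy s r hrs.symm) (y := x) (dcyc (dcyc (dcyc (show det3 _ _ _ ≠ 0 from
      fun h => (hP.mix hij.symm (hy s r hrs.symm) (y := x)) h))) |> fun _ => (det_cyc _ _ _).trans this)
  have hprod : ∏ r, lin (n r) ∣ F := by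
    refine Finset.prod_dvd_of_isRelPrime ?_ (fun r _ => hd r)
    intro r _ s _ hrs
    exact hrel r s hrs
  obtain ⟨K, hK⟩ := hprod
  have hG : (∏ r, lin (n r)).IsHomogeneous 4 := by
    have := IsHomogeneous.prod (Finset.univ : Finset (Fin 4)) (fun r => lin (n r)) (fun _ => 1)
      (fun j _ => lin_hom _)
    simpa using this
  obtain ⟨b, hb, _⟩ := hom_quot hF h0 hK hG
  omega

lemma collin_iff_det (p q r : P2) : Collin p q r ↔ det3 p.rep q.rep r.rep = 0 := by
  have hr : Set.range ![p.rep, q.rep, r.rep] = {p.rep, q.rep, r.rep} := by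
    ext v; simp; tauto
  have h1 : LinearIndependent ℂ ![p.rep, q.rep, r.rep] ↔ det3 p.rep q.rep r.rep ≠ 0 := by
    have := Matrix.linearIndependent_rows_iff_isUnit (A := Matrix.of ![p.rep, q.rep, r.rep])
    rw [Matrix.isUnit_iff_isUnit_det, isUnit_iff_ne_zero] at this
    have hd : (Matrix.of ![p.rep, q.rep, r.rep]).det = det3 p.rep q.rep r.rep := by
      rw [Matrix.det_fin_three]
      simp [det3, dt, crs0, crs1, crs2]
      ring
    rw [hd] at this
    exact this
  have h2 := linearIndependent_iff_card_eq_finrank_span (R := ℂ) (b := ![p.rep, q.rep, r.rep])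
  have h3 := finrank_range_le_card (R := ℂ) (b := ![p.rep, q.rep, r.rep])
  rw [h1] at h2
  rw [Set.finrank, hr] at h2 h3
  rw [Fintype.card_fin] at h2 h3
  unfold Collin
  constructor
  · intro h
    by_contra hc
    have := h2.1 hc
    omega
  · intro h
    by_contra hc
    exact h2.2 (by omega) h

lemma crs_rep_ne {p q : P2} (h : p ≠ q) : crs p.rep q.rep ≠ 0 := by
  intro hc
  obtain ⟨c, hc⟩ := prop_of_crs p.rep_nonzero hc
  apply h
  rw [← p.mk_rep, ← q.mk_rep, eq_comm, Projectivization.mk_eq_mk_iff']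
  exact ⟨c, hc.symm⟩

lemma net_of_realizes {H : Type} [AddCommGroup H] {p₁ p₂ p₃ : H → P2}
    (h : Realizes p₁ p₂ p₃) : Net (fun i x => ((![p₁, p₂, p₃] : Fin 3 → H → P2) i x).rep) := by
  obtain ⟨i1, i2, i3, d12, d13, d23, hcol⟩ := h
  have e12 : ∀ x y, p₁ x ≠ p₂ y := fun x y => Set.disjoint_range_iff.1 d12 x y
  have e13 : ∀ x y, p₁ x ≠ p₃ y := fun x y => Set.disjoint_range_iff.1 d13 x y
  have e23 : ∀ x y, p₂ x ≠ p₃ y := fun x y => Set.disjoint_range_iff.1 d23 x y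
  have base : ∀ x y z, det3 (p₁ x).rep (p₂ y).rep (p₃ z).rep = 0 ↔ x + y + z = 0 := fun x y z =>
    (collin_iff_det _ _ _).symm.trans (hcol x y z)
  have swap : ∀ u v w : Vec, det3 v u w = 0 ↔ det3 u v w = 0 := fun u v w => by
    rw [det_swap, neg_eq_zero]
  have b231 : ∀ x y z, det3 (p₂ x).rep (p₃ y).rep (p₁ z).rep = 0 ↔ x + y + z = 0 := fun x y z => by
    rw [det_cyc, base, add_rotate]
  have b312 : ∀ x y z, det3 (p₃ x).rep (p₁ y).rep (p₂ z).rep = 0 ↔ x + y + z = 0 := fun x y z => by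
    rw [det_cyc, b231, add_rotate]
  constructor
  · intro i j x y hij
    apply crs_rep_ne
    fin_cases i <;> fin_cases j <;> simp at hij ⊢
    · exact fun e => hij (i1 e)
    · exact e12 _ _
    · exact e13 _ _
    · exact (e12 _ _).symm
    · exact fun e => hij (i2 e)
    · exact e23 _ _
    · exact (e13 _ _).symm
    · exact (e23 _ _).symm
    · exact fun e => hij (i3 e)
  · intro i j k x y z hij hjk hik
    fin_cases i <;> fin_cases j <;> fin_cases k <;> simp at hij hjk hik ⊢
    · exact base _ _ _
    · rw [swap, b312, add_comm y x]
    · rw [swap, base, add_comm y x]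
    · exact b231 _ _ _
    · exact b312 _ _ _
    · rw [swap, b231, add_comm y x]

end Aux

/-- If a finite abelian group `H` has an element of order at least 10,
then every realization of `H` by a 3-net in ℙ²(ℂ) is algebraic. -/
theorem realization_is_algebraic_of_large_order (H : Type) [AddCommGroup H] [Fintype H]
    (hord : ∃ h : H, 10 ≤ addOrderOf h)
    (p₁ p₂ p₃ : H → P2) (h : Realizes p₁ p₂ p₃) :
    AlgebraicOn p₁ p₂ p₃ := by
  obtain ⟨g, hg⟩ := hord
  have hP := net_of_realizes h
  obtain ⟨F, h0, hF, hz⟩ := net_cubic hP hg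
  refine ⟨F, h0, hF, ?_⟩
  rintro q ((⟨x, rfl⟩ | ⟨x, rfl⟩) | ⟨x, rfl⟩)
  · exact ⟨hz 0 x, net_smooth hP hg h0 hF hz 0 x⟩
  · exact ⟨hz 1 x, net_smooth hP hg h0 hF hz 1 x⟩
  · exact ⟨hz 2 x, net_smooth hP hg h0 hF hz 2 x⟩
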